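/- arXiv:2412.20729 — 3 statements merged into one kernel-verified Lean document; each statement's English description precedes it below -/
import Mathlib

section
/- If G is a connected chordal graph admitting a tree representation whose host tree T is a subdivided caterpillar, then lpt(G) ≤ 26. -/
open SimpleGraph

/-- A graph is chordal if every cycle on at least 4 vertices has a chord
(an edge of the graph joining two vertices of the cycle that is not an edge of the cycle). -/
def IsChordal {V : Type} (G : SimpleGraph V) : Prop :=
  ∀ (v : V) (c : G.Walk v v), c.IsCycle → 4 ≤ c.length →
    ∃ a b : V, a ∈ c.support ∧ b ∈ c.support ∧ G.Adj a b ∧ s(a, b) ∉ c.edges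

/-- A tree representation of `G` with host tree `T`: each vertex `u` of `G` gets a
nonempty subtree `S u` of `T`, and distinct vertices are adjacent iff their subtrees meet. -/
structure TreeRep {V W : Type} (G : SimpleGraph V) (T : SimpleGraph W) : Type where
  isTree : T.IsTree
  S : V → Set W
  subtree_connected : ∀ u : V, (T.induce (S u)).Connected
  adj_iff : ∀ u v : V, u ≠ v → (G.Adj u v ↔ (S u ∩ S v).Nonempty)

/-- A tree representation is minimal if no tree representation of `G` has a host tree
with fewer vertices. -/
def TreeRep.IsMinimal {V W : Type} [Fintype W] {G : SimpleGraph V} {T : SimpleGraph W}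
    (_R : TreeRep G T) : Prop :=
  ∀ (W' : Type) [Fintype W'] (T' : SimpleGraph W'),
    Nonempty (TreeRep G T') → Fintype.card W ≤ Fintype.card W'

/-- The bag of a host tree vertex `x`. -/
def TreeRep.bag {V W : Type} {G : SimpleGraph V} {T : SimpleGraph W}
    (R : TreeRep G T) (x : W) : Set V :=
  {u : V | x ∈ R.S u}

/-- In `T` rooted at `r`, the (vertex set of the) subtree rooted at `x`: all vertices `w`
such that the `r`–`w` path contains `x`. -/
def rootedSubtree {W : Type} (T : SimpleGraph W) (r x : W) : Set W :=
  {w : W | ∀ p : T.Walk r w, p.IsPath → x ∈ p.support}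

/-- The core of a subgraph `H` of `G`: the union over edges `uv` of `H` of `V(S u ∩ S v)`,
a set of host-tree vertices. -/
def TreeRep.core {V W : Type} {G : SimpleGraph V} {T : SimpleGraph W}
    (R : TreeRep G T) (H : G.Subgraph) : Set W :=
  {t : W | ∃ u v : V, H.Adj u v ∧ t ∈ R.S u ∧ t ∈ R.S v}

/-- `C` is a connected component of the subgraph of `T` induced on the vertex set `s`. -/
def IsCompOf {W : Type} (T : SimpleGraph W) (s C : Set W) : Prop :=
  C.Nonempty ∧ C ⊆ s ∧ (T.induce C).Connected ∧
    ∀ ⦃a b : W⦄, a ∈ C → b ∈ s → T.Adj a b → b ∈ C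

/-- A graph is 2-connected if it has more than 2 vertices and deleting any one vertex
leaves it connected. -/
def TwoConnected {V : Type} (G : SimpleGraph V) : Prop :=
  2 < Nat.card V ∧ ∀ v : V, (G.induce {v}ᶜ).Connected

/-- `G` is `k`-connected: more than `k` vertices, and deleting fewer than `k` vertices
leaves it connected. -/
def IsKConnectedGraph {V : Type} (G : SimpleGraph V) (k : ℕ) : Prop :=
  k < Nat.card V ∧ ∀ s : Set V, s.Finite → s.ncard < k → (G.induce sᶜ).Connected

/-- The vertex connectivity `κ(G)`: the maximum `k` such that `G` is `k`-connected. -/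
noncomputable def vertexConnectivity {V : Type} (G : SimpleGraph V) : ℕ :=
  sSup {k : ℕ | IsKConnectedGraph G k}

/-- `p` is a path of maximum length in `G`. -/
def IsLongestPath {V : Type} (G : SimpleGraph V) {a b : V} (p : G.Walk a b) : Prop :=
  p.IsPath ∧ ∀ (c d : V) (q : G.Walk c d), q.IsPath → q.length ≤ p.length

/-- `c` is a cycle of maximum length in `G`. -/
def IsLongestCycle {V : Type} (G : SimpleGraph V) {a : V} (c : G.Walk a a) : Prop :=
  c.IsCycle ∧ ∀ (d : V) (q : G.Walk d d), q.IsCycle → q.length ≤ c.length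

/-- The longest path transversal number of `G`: the least size of a set of vertices
meeting every longest path. -/
noncomputable def lpt {V : Type} (G : SimpleGraph V) : ℕ :=
  sInf {k : ℕ | ∃ A : Set V, A.Finite ∧ A.ncard = k ∧
    ∀ (a b : V) (p : G.Walk a b), IsLongestPath G p → ∃ v ∈ A, v ∈ p.support}

/-- The longest cycle transversal number of `G`: the least size of a set of vertices
meeting every longest cycle. -/
noncomputable def lct {V : Type} (G : SimpleGraph V) : ℕ :=
  sInf {k : ℕ | ∃ A : Set V, A.Finite ∧ A.ncard = k ∧
    ∀ (a : V) (c : G.Walk a a), IsLongestCycle G c → ∃ v ∈ A, v ∈ c.support}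

/-- `DQX T q X Q0`: the union, over `y ∈ Q0`, of the component of `X − E(Q)` containing
`y` (all vertices joined to some `y ∈ Q0` by a walk inside `X` avoiding the edges of `q`). -/
def DQX {W : Type} (T : SimpleGraph W) {x z : W} (q : T.Walk x z) (X : Set W)
    (Q0 : Set W) : Set W :=
  {w : W | ∃ y ∈ Q0, ∃ d : (T.deleteEdges {e : Sym2 W | e ∈ q.edges}).Walk y w,
    ∀ a ∈ d.support, a ∈ X}

/-- Cutter can force the Cutter–Chooser game from position `(X, x)` (a subtree `X` of the
host tree, rooted at `x`) to end within `t` rounds: Cutter picks `z ∈ X` and cuts along the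
`x`–`z` path `Q` in `X`; either `X = Q` (game over), or for every component `X'` of
`X − V(Q)` (with its root `x'`, the vertex of `X'` adjacent to `Q`) that Chooser may pick,
Cutter wins within `t - 1` further rounds. -/
def cutterWins {W : Type} (T : SimpleGraph W) : ℕ → Set W → W → Prop
  | 0, _, _ => False
  | t + 1, X, x =>
      ∃ z ∈ X, ∃ p : T.Walk x z, p.IsPath ∧ (∀ w ∈ p.support, w ∈ X) ∧
        (X = {w : W | w ∈ p.support} ∨
          ∀ (X' : Set W) (x' : W), IsCompOf T (X \ {w : W | w ∈ p.support}) X' →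
            x' ∈ X' → (∃ u ∈ p.support, T.Adj u x') → cutterWins T t X' x')

/-- `ccg(X, x)`: the number of rounds of the Cutter–Chooser game on the subtree `X` of the
host tree rooted at `x`, under optimal play. -/
noncomputable def ccgOn {W : Type} (T : SimpleGraph W) (X : Set W) (x : W) : ℕ :=
  sInf {t : ℕ | cutterWins T t X x}

/-- `ccg(T)`: the minimum over roots `r` of `ccg(T, r)`. -/
noncomputable def ccg {W : Type} (T : SimpleGraph W) : ℕ :=
  sInf (Set.range fun r : W => ccgOn T Set.univ r)

/-- A subdivided caterpillar: a tree having a (spine) path containing every vertex of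
degree at least 3. -/
def IsSubdividedCaterpillar {W : Type} (T : SimpleGraph W) : Prop :=
  T.IsTree ∧ ∃ (a b : W) (q : T.Walk a b), q.IsPath ∧
    ∀ v : W, 3 ≤ (T.neighborSet v).ncard → v ∈ q.support

/-- A subdivided star: a tree with at most one vertex of degree at least 3. -/
def IsSubdividedStar {W : Type} (T : SimpleGraph W) : Prop :=
  T.IsTree ∧ ∀ v w : W, 3 ≤ (T.neighborSet v).ncard → 3 ≤ (T.neighborSet w).ncard → v = w

/-- A leaf: a vertex of degree 1. -/
def IsLeaf {W : Type} (T : SimpleGraph W) (v : W) : Prop := (T.neighborSet v).ncard = 1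

/-- `mf T`: the maximum over edges `e` of `T` of the minimum number of leaves of `T`
contained in a component of `T − e`. -/
noncomputable def mf {W : Type} (T : SimpleGraph W) : ℕ :=
  sSup {k : ℕ | ∃ u v : W, T.Adj u v ∧
    k = min {w : W | IsLeaf T w ∧ (T.deleteEdges {s(u, v)}).Reachable u w}.ncard
            {w : W | IsLeaf T w ∧ (T.deleteEdges {s(u, v)}).Reachable v w}.ncard}

/-- In `T` rooted at `r`, `v` is a child of `u`. -/
def IsChildIn {W : Type} (T : SimpleGraph W) (r u v : W) : Prop :=
  T.Adj u v ∧ ∀ p : T.Walk r v, p.IsPath → u ∈ p.support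

/-- In `T` rooted at `r`, `u` is childless. -/
def IsChildlessIn {W : Type} (T : SimpleGraph W) (r u : W) : Prop :=
  ¬ ∃ v : W, IsChildIn T r u v

section TreePart
variable {W : Type} {T : SimpleGraph W}

/-- `x` lies on every walk from `s` to `t`. -/
def TBtw (T : SimpleGraph W) (s x t : W) : Prop := ∀ p : T.Walk s t, x ∈ p.support

theorem TBtw.symm {s x t : W} (h : TBtw T s x t) : TBtw T t x s := fun p => by
  have := h p.reverse
  simpa using this

theorem TBtw.split {s x t : W} (h : TBtw T s x t) (c : W) : TBtw T s x c ∨ TBtw T c x t := by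
  by_contra hh
  unfold TBtw at hh
  push Not at hh
  obtain ⟨⟨p, hp⟩, q, hq⟩ := hh
  have := h (p.append q)
  rw [Walk.mem_support_append_iff] at this
  tauto

theorem TBtw.left (s t : W) : TBtw T s s t := fun p => p.start_mem_support
theorem TBtw.right (s t : W) : TBtw T s t t := fun p => p.end_mem_support
theorem TBtw.eq_of_self {s x : W} (h : TBtw T s x s) : x = s := by
  simpa using h Walk.nil

theorem TBtw.trans {r a g t : W} (h1 : TBtw T r a g) (h2 : TBtw T r g t) : TBtw T r a t := by
  classical
  intro p
  have hg := h2 p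
  exact p.support_takeUntil_subset_support hg (h1 (p.takeUntil g hg))

theorem btw_of_path (hT : T.IsAcyclic) {s x t : W} {p : T.Walk s t} (hp : p.IsPath)
    (hx : x ∈ p.support) : TBtw T s x t := by
  classical
  intro q
  have h : q.bypass = p := by
    have := hT.subsingleton_path s t
    have := Subsingleton.elim (⟨q.bypass, q.bypass_isPath⟩ : T.Path s t) ⟨p, hp⟩
    exact congrArg Subtype.val this
  apply q.support_bypass_subset_support
  rw [h]
  exact hx

theorem exists_path (hT : T.IsTree) (s t : W) : ∃ p : T.Walk s t, p.IsPath := by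
  classical
  obtain ⟨p⟩ := hT.connected.preconnected s t
  exact ⟨p.bypass, p.bypass_isPath⟩

theorem TBtw.antisymm (hT : T.IsTree) {r a b : W} (h1 : TBtw T r a b) (h2 : TBtw T r b a) :
    a = b := by
  classical
  by_contra hab
  obtain ⟨p, hp⟩ := exists_path hT r b
  have ha := h1 p
  exact Walk.endpoint_notMem_support_takeUntil hp ha (fun h => hab h.symm) (h2 (p.takeUntil a ha))

theorem TBtw.compare (hT : T.IsTree) {r a b t : W} (h1 : TBtw T r a t) (h2 : TBtw T r b t) :
    TBtw T r a b ∨ TBtw T r b a := by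
  rcases h1.split b with h | h
  · exact Or.inl h
  rcases h2.split a with h' | h'
  · exact Or.inr h'
  have := TBtw.antisymm hT h.symm h'.symm
  subst this
  exact Or.inl (TBtw.right _ _)

theorem isPath_append' {a b c : W} {p : T.Walk a b} {q : T.Walk b c} (hp : p.IsPath)
    (hq : q.IsPath) (h : ∀ x ∈ p.support, x ∈ q.support → x = b) : (p.append q).IsPath := by
  rw [Walk.isPath_def, Walk.support_append]
  rw [Walk.isPath_def] at hp hq
  refine List.Nodup.append hp hq.tail ?_
  intro x hx hx'
  have hxb := h x hx (List.mem_of_mem_tail hx')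
  subst hxb
  rw [← Walk.cons_tail_support] at hq
  exact (List.nodup_cons.1 hq).1 hx'

theorem exists_first (P : Set W) {g r : W} (w : T.Walk g r) (hr : r ∈ P) :
    ∃ m ∈ P, ∃ w' : T.Walk g m, ∀ x ∈ w'.support, x ∈ P → x = m := by
  induction w with
  | nil => exact ⟨_, hr, Walk.nil, by simp⟩
  | @cons u v w h p ih =>
    by_cases hu : u ∈ P
    · exact ⟨u, hu, Walk.nil, by simp⟩
    · obtain ⟨m, hm, w', hw'⟩ := ih hr
      refine ⟨m, hm, Walk.cons h w', ?_⟩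
      intro x hx hxP
      rw [Walk.support_cons, List.mem_cons] at hx
      rcases hx with rfl | hx
      · exact absurd hxP hu
      · exact hw' x hx hxP

theorem three_le_ncard [Finite W] {m r g t : W} (p1 : T.Walk m r) (p2 : T.Walk m g) (p3 : T.Walk m t)
    (h12 : ∀ x ∈ p1.support, x ∈ p2.support → x = m)
    (h13 : ∀ x ∈ p1.support, x ∈ p3.support → x = m)
    (h23 : ∀ x ∈ p2.support, x ∈ p3.support → x = m)
    (hr : m ≠ r) (hg : m ≠ g) (ht : m ≠ t) : 3 ≤ (T.neighborSet m).ncard := by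
  have a1 := p1.adj_snd (Walk.not_nil_of_ne hr)
  have a2 := p2.adj_snd (Walk.not_nil_of_ne hg)
  have a3 := p3.adj_snd (Walk.not_nil_of_ne ht)
  have m1 : p1.snd ∈ p1.support := p1.getVert_mem_support 1
  have m2 : p2.snd ∈ p2.support := p2.getVert_mem_support 1
  have m3 : p3.snd ∈ p3.support := p3.getVert_mem_support 1
  have n12 : p1.snd ≠ p2.snd := fun h => a1.ne (h12 _ m1 (h ▸ m2)).symm
  have n13 : p1.snd ≠ p3.snd := fun h => a1.ne (h13 _ m1 (h ▸ m3)).symm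
  have n23 : p2.snd ≠ p3.snd := fun h => a2.ne (h23 _ m2 (h ▸ m3)).symm
  rw [← Set.ncard_eq_three.2 ⟨p1.snd, p2.snd, p3.snd, n12, n13, n23, rfl⟩]
  apply Set.ncard_le_ncard _ (Set.toFinite _)
  intro x hx
  rcases hx with rfl | rfl | rfl
  · exact a1
  · exact a2
  · exact a3

theorem median [Finite W] (hT : T.IsTree) (r g t : W) :
    ∃ m, TBtw T r m g ∧ TBtw T r m t ∧ TBtw T g m t ∧
      (m = r ∨ m = g ∨ m = t ∨ 3 ≤ (T.neighborSet m).ncard) := by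
  classical
  obtain ⟨p, hp⟩ := exists_path hT r t
  obtain ⟨w, -⟩ := exists_path hT g r
  obtain ⟨m, hm, w', hw'⟩ := exists_first {x | x ∈ p.support} w p.start_mem_support
  have hm : m ∈ p.support := hm
  set p1 := (p.takeUntil m hm).reverse
  set p3 := p.dropUntil m hm
  set p2 := w'.bypass.reverse
  have hp1 : p1.IsPath := (hp.takeUntil hm).reverse
  have hp3 : p3.IsPath := hp.dropUntil hm
  have hp2 : p2.IsPath := w'.bypass_isPath.reverse
  have s1 : ∀ x ∈ p1.support, x ∈ p.support := by
    intro x hx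
    simp only [p1, Walk.support_reverse, List.mem_reverse] at hx
    exact p.support_takeUntil_subset_support hm hx
  have s3 : ∀ x ∈ p3.support, x ∈ p.support := fun x hx =>
    p.support_dropUntil_subset_support hm hx
  have s2 : ∀ x ∈ p2.support, x ∈ w'.support := by
    intro x hx
    simp only [p2, Walk.support_reverse, List.mem_reverse] at hx
    exact w'.support_bypass_subset_support hx
  have h12 : ∀ x ∈ p1.support, x ∈ p2.support → x = m := fun x hx hx' =>
    hw' x (s2 x hx') (s1 x hx)
  have h23 : ∀ x ∈ p2.support, x ∈ p3.support → x = m := fun x hx hx' =>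
    hw' x (s2 x hx) (s3 x hx')
  have h13 : ∀ x ∈ p1.support, x ∈ p3.support → x = m := by
    intro x hx hx'
    by_contra hne
    have hpp : ((p.takeUntil m hm).append (p.dropUntil m hm)).IsPath := by
      rw [Walk.take_spec]; exact hp
    rw [Walk.isPath_def, Walk.support_append] at hpp
    simp only [p1, Walk.support_reverse, List.mem_reverse] at hx
    have hx2 : x ∈ (p.dropUntil m hm).support := hx'
    rw [Walk.mem_support_iff] at hx2
    rcases hx2 with h | h
    · exact hne h
    · exact (List.nodup_append'.1 hpp).2.2 hx h
  refine ⟨m, ?_, ?_, ?_, ?_⟩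
  · refine btw_of_path hT.isAcyclic (p := p1.reverse.append p2)
      (isPath_append' hp1.reverse hp2 ?_) ?_
    · intro x hx; simp only [Walk.support_reverse, List.mem_reverse] at hx; exact h12 x hx
    · rw [Walk.mem_support_append_iff]; exact Or.inr p2.start_mem_support
  · exact btw_of_path hT.isAcyclic hp hm
  · refine btw_of_path hT.isAcyclic (p := p2.reverse.append p3)
      (isPath_append' hp2.reverse hp3 ?_) ?_
    · intro x hx; simp only [Walk.support_reverse, List.mem_reverse] at hx; exact h23 x hx
    · rw [Walk.mem_support_append_iff]; exact Or.inr p3.start_mem_support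
  · by_cases e1 : m = r
    · exact Or.inl e1
    by_cases e2 : m = g
    · exact Or.inr (Or.inl e2)
    by_cases e3 : m = t
    · exact Or.inr (Or.inr (Or.inl e3))
    exact Or.inr (Or.inr (Or.inr (three_le_ncard p1 p2 p3 h12 h13 h23 e1 e2 e3)))

/-- Convex sets of a tree. -/
def Conv (T : SimpleGraph W) (F : Set W) : Prop :=
  ∀ s ∈ F, ∀ t ∈ F, ∀ x, TBtw T s x t → x ∈ F

theorem conv_of_connected {F : Set W} (h : (T.induce F).Connected) : Conv T F := by
  intro s hs t ht x hx
  obtain ⟨p⟩ := h.preconnected ⟨s, hs⟩ ⟨t, ht⟩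
  have h1 := hx (p.map (Embedding.induce F).toHom)
  have h2 := Walk.support_map (Embedding.induce F).toHom p
  replace h1 : x ∈ (Walk.map (Embedding.induce (G := T) F).toHom p).support := h1
  erw [h2, List.mem_map] at h1
  obtain ⟨y, -, hy⟩ := h1
  rw [← hy]
  exact y.2

theorem Conv.union {F F' : Set W} (h : Conv T F) (h' : Conv T F') {c : W} (hc : c ∈ F)
    (hc' : c ∈ F') : Conv T (F ∪ F') := by
  have key : ∀ s ∈ F ∪ F', ∀ x, TBtw T s x c → x ∈ F ∪ F' := by
    rintro s (hs | hs) x hx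
    · exact Or.inl (h s hs c hc x hx)
    · exact Or.inr (h' s hs c hc' x hx)
  intro s hs t ht x hx
  rcases hx.split c with hx | hx
  · exact key s hs x hx
  · exact key t ht x hx.symm

theorem conv_support {a b : W} (q : T.Walk a b) :
    Conv T {x | x ∈ q.support} := by
  classical
  intro s hs t ht x hx
  have key : ∀ s ∈ q.support, TBtw T s x a → x ∈ q.support := by
    intro s hs h
    exact q.support_takeUntil_subset_support hs (h.symm (q.takeUntil s hs))
  rcases hx.split a with hx | hx
  · exact key s hs hx
  · exact key t ht hx.symm

/-- the depth of a vertex with respect to a root -/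
noncomputable def depth (T : SimpleGraph W) (r t : W) : ℕ := {a | TBtw T r a t}.ncard

theorem depth_lt [Finite W] (hT : T.IsTree) {r a t : W} (h : TBtw T r a t) (hne : a ≠ t) :
    depth T r a < depth T r t := by
  apply Set.ncard_lt_ncard _ (Set.toFinite _)
  refine ⟨fun x hx => TBtw.trans hx h, fun hs => ?_⟩
  have : TBtw T r t a := hs (TBtw.right r t)
  exact hne (h.antisymm hT this)

theorem gate [Finite W] (hT : T.IsTree) {F : Set W} (hF : Conv T F) (hne : F.Nonempty) (r : W) :
    ∃ g ∈ F, ∀ t ∈ F, TBtw T r g t := by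
  obtain ⟨g, hg, hmin⟩ := Set.exists_min_image F (depth T r) (Set.toFinite _) hne
  refine ⟨g, hg, fun t ht => ?_⟩
  obtain ⟨m, h1, h2, h3, -⟩ := median hT r g t
  by_cases hmg : m = g
  · rwa [hmg] at h2
  · exact absurd (depth_lt hT h1 hmg) (not_lt.2 (hmin m (hF g hg t ht m h3)))

theorem helly [Finite W] (hT : T.IsTree) {ι : Type*} (I : Set ι) (hI : I.Nonempty)
    (F : ι → Set W) (hc : ∀ i ∈ I, Conv T (F i))
    (hp : ∀ i ∈ I, ∀ j ∈ I, (F i ∩ F j).Nonempty) : ∃ x, ∀ i ∈ I, x ∈ F i := by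
  classical
  obtain ⟨i0, hi0⟩ := hI
  obtain ⟨r, -⟩ := hp i0 hi0 i0 hi0
  have hg : ∀ i ∈ I, ∃ g ∈ F i, ∀ t ∈ F i, TBtw T r g t := fun i hi =>
    gate hT (hc i hi) ⟨_, (hp i hi i hi).some_mem.1⟩ r
  obtain ⟨g, ⟨i, hi, hgi, hgt⟩, hmax⟩ :=
    Set.exists_max_image {g | ∃ i ∈ I, g ∈ F i ∧ ∀ t ∈ F i, TBtw T r g t} (depth T r)
      (Set.toFinite _) (by obtain ⟨g, h1, h2⟩ := hg i0 hi0; exact ⟨g, i0, hi0, h1, h2⟩)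
  refine ⟨g, fun j hj => ?_⟩
  obtain ⟨g', hg', hgt'⟩ := hg j hj
  obtain ⟨t, ht, ht'⟩ := hp i hi j hj
  have hb : TBtw T r g' g := by
    rcases TBtw.compare hT (hgt t ht) (hgt' t ht') with h | h
    · by_cases e : g = g'
      · rw [e]; exact TBtw.right _ _
      · exact absurd (depth_lt hT h e) (not_lt.2 (hmax g' ⟨j, hj, hg', hgt'⟩))
    · exact h
  rcases (hgt t ht).split g' with h | h
  · have := h.antisymm hT hb
    rwa [this]
  · exact hc j hj _ hg' _ ht' _ h

end TreePart
section LegPart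
variable {V W : Type} {G : SimpleGraph V} {T : SimpleGraph W} {S : V → Set W} {Q : Set W}

/-- The two points are not separated by the set. -/
def SameLeg (T : SimpleGraph W) (Q : Set W) (t t' : W) : Prop := ∀ q ∈ Q, ¬ TBtw T t q t'

theorem SameLeg.symm {t t' : W} (h : SameLeg T Q t t') : SameLeg T Q t' t :=
  fun q hq hb => h q hq hb.symm

theorem SameLeg.trans {a b c : W} (h : SameLeg T Q a b) (h' : SameLeg T Q b c) :
    SameLeg T Q a c := by
  intro q hq hb
  rcases hb.split b with hb | hb
  · exact h q hq hb
  · exact h' q hq hb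

theorem SameLeg.refl {t : W} (h : t ∉ Q) : SameLeg T Q t t := by
  intro q hq hb
  exact h (hb.eq_of_self ▸ hq)

/-- The standing assumptions: `S` is a family of nonempty subtrees of the tree `T` representing
`G` and `Q` is a subtree of `T` containing all branching vertices. -/
structure Ctx (G : SimpleGraph V) (T : SimpleGraph W) (S : V → Set W) (Q : Set W) : Prop where
  tree : T.IsTree
  conv : ∀ u, Conv T (S u)
  adj : ∀ u v : V, u ≠ v → (G.Adj u v ↔ ∃ t, t ∈ S u ∧ t ∈ S v)
  qconv : Conv T Q
  qne : Q.Nonempty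
  branch : ∀ v : W, 3 ≤ (T.neighborSet v).ncard → v ∈ Q

/-- a leg vertex: its subtree misses `Q` -/
def Leg (S : V → Set W) (Q : Set W) (f : V) : Prop := ∀ t ∈ S f, t ∉ Q

/-- `z` is the gate of `t0` to `Q` -/
def IsGate (T : SimpleGraph W) (Q : Set W) (t0 z : W) : Prop := z ∈ Q ∧ ∀ q ∈ Q, TBtw T t0 z q

theorem IsGate.congr {t0 z t : W} (h : IsGate T Q t0 z) (hs : SameLeg T Q t0 t) :
    IsGate T Q t z := by
  refine ⟨h.1, fun q hq => ?_⟩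
  rcases (h.2 q hq).split t with h' | h'
  · exact absurd h' (hs z h.1)
  · exact h'

theorem IsGate.of_not {t0 z t : W} (h : IsGate T Q t0 z) (hs : ¬ SameLeg T Q t0 t) :
    TBtw T t0 z t := by
  unfold SameLeg at hs
  push Not at hs
  obtain ⟨q, hq, hb⟩ := hs
  exact (h.2 q hq).trans hb

theorem Ctx.exists_gate [Finite W] (C : Ctx G T S Q) (t0 : W) : ∃ z, IsGate T Q t0 z := by
  obtain ⟨g, h1, h2⟩ := gate C.tree C.qconv C.qne t0
  exact ⟨g, h1, h2⟩

theorem Leg.sameLeg (C : Ctx G T S Q) {f : V} (hf : Leg S Q f) {t t' : W} (ht : t ∈ S f)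
    (ht' : t' ∈ S f) : SameLeg T Q t t' :=
  fun q hq hb => hf q (C.conv f t ht t' ht' q hb) hq

theorem Ctx.leg_path [Finite W] (C : Ctx G T S Q) {t0 z : W} (h0 : t0 ∉ Q)
    (hz : IsGate T Q t0 z) : ∃ ts, ∀ t, SameLeg T Q t0 t → TBtw T z t ts := by
  obtain ⟨ts, hts, hmax⟩ := Set.exists_max_image {t | SameLeg T Q t0 t} (depth T z)
    (Set.toFinite _) ⟨t0, SameLeg.refl h0⟩
  refine ⟨ts, fun t ht => ?_⟩
  have hs : SameLeg T Q t ts := ht.symm.trans hts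
  obtain ⟨m, h1, h2, h3, h4⟩ := median C.tree z t ts
  have hmQ : m ∉ Q := fun hm => hs m hm h3
  rcases h4 with h4 | h4 | h4 | h4
  · exact absurd (h4 ▸ hz.1) hmQ
  · rwa [h4] at h2
  · rw [h4] at h1
    by_cases e : ts = t
    · rw [e]; exact TBtw.right _ _
    · exact absurd (depth_lt C.tree h1 e) (not_lt.2 (hmax t ht))
  · exact absurd (C.branch m h4) hmQ

theorem Ctx.pl1 [Finite W] (C : Ctx G T S Q) (x b : W) {v0 : V} (h0 : x ∈ S v0) :
    ∃ v, x ∈ S v ∧ ∀ u, x ∈ S u → ∀ t, TBtw T x t b → t ∈ S u → t ∈ S v := by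
  obtain ⟨ts, ⟨hb, v, hxv, htv⟩, hmax⟩ := Set.exists_max_image
    {t | TBtw T x t b ∧ ∃ v, x ∈ S v ∧ t ∈ S v} (depth T x)
    (Set.toFinite _) ⟨x, TBtw.left _ _, v0, h0, h0⟩
  refine ⟨v, hxv, fun u hu t ht htu => ?_⟩
  rcases TBtw.compare C.tree ht hb with h | h
  · exact C.conv v x hxv ts htv t h
  · by_cases e : ts = t
    · rwa [← e]
    · exact absurd (depth_lt C.tree h e) (not_lt.2 (hmax t ⟨ht, u, hu, htu⟩))

theorem Ctx.pl [Finite W] (C : Ctx G T S Q) (x c b : W) {v0 : V} (h0 : x ∈ S v0) :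
    ∃ v1 v2, x ∈ S v1 ∧ x ∈ S v2 ∧
      ∀ u, x ∈ S u → ∀ t, TBtw T c t b → t ∈ S u → t ∈ S v1 ∨ t ∈ S v2 := by
  obtain ⟨v1, h1, h1'⟩ := C.pl1 x c h0
  obtain ⟨v2, h2, h2'⟩ := C.pl1 x b h0
  refine ⟨v1, v2, h1, h2, fun u hu t ht htu => ?_⟩
  rcases ht.split x with h | h
  · exact Or.inl (h1' u hu t h.symm htu)
  · exact Or.inr (h2' u hu t h htu)

end LegPart

section ListPart
variable {V W : Type} {G : SimpleGraph V} {T : SimpleGraph W} {S : V → Set W} {Q : Set W}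

/-- longest paths, as lists -/
def LP (G : SimpleGraph V) (l : List V) : Prop :=
  l.IsChain G.Adj ∧ l.Nodup ∧ ∀ l' : List V, l'.IsChain G.Adj → l'.Nodup → l'.length ≤ l.length

theorem isChain_adj_reverse {l : List V} (h : l.IsChain G.Adj) : l.reverse.IsChain G.Adj := by
  rw [List.isChain_reverse]
  exact h.imp fun a b hab => hab.symm

theorem LP.reverse {l : List V} (h : LP G l) : LP G l.reverse :=
  ⟨isChain_adj_reverse h.1, List.nodup_reverse.2 h.2.1, by simpa using h.2.2⟩

theorem LP.full (C : Ctx G T S Q) {X Y : List V} {a b v : V} (h : LP G (X ++ a :: b :: Y))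
    {t : W} (ha : t ∈ S a) (hb : t ∈ S b) (hv : t ∈ S v) : v ∈ X ++ a :: b :: Y := by
  by_contra hn
  have hav : a ≠ v := by rintro rfl; simp at hn
  have hbv : b ≠ v := by rintro rfl; simp at hn
  have h1 : (X ++ a :: v :: b :: Y).IsChain G.Adj := by
    have h0 := h.1
    rw [List.isChain_append_cons_cons] at h0
    rw [List.isChain_append_cons_cons, List.isChain_cons_cons]
    exact ⟨h0.1, (C.adj a v hav).2 ⟨t, ha, hv⟩, (C.adj v b hbv.symm).2 ⟨t, hv, hb⟩, h0.2.2⟩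
  have h2 : (X ++ a :: v :: b :: Y).Nodup := by
    have : (X ++ a :: v :: b :: Y).Perm (v :: (X ++ a :: b :: Y)) := by
      have := @List.perm_middle V v (X ++ [a]) (b :: Y)
      simpa using this
    rw [this.nodup_iff, List.nodup_cons]
    exact ⟨hn, h.2.1⟩
  have := h.2.2 _ h1 h2
  simp at this

theorem LP.full_head (C : Ctx G T S Q) {Y : List V} {a v : V} (h : LP G (a :: Y))
    {t : W} (ha : t ∈ S a) (hv : t ∈ S v) : v ∈ a :: Y := by
  by_contra hn
  have hav : v ≠ a := by rintro rfl; simp at hn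
  have h1 : (v :: a :: Y).IsChain G.Adj :=
    List.isChain_cons_cons.2 ⟨(C.adj v a hav).2 ⟨t, hv, ha⟩, h.1⟩
  have := h.2.2 _ h1 (List.nodup_cons.2 ⟨hn, h.2.1⟩)
  simp at this

theorem LP.full_last (C : Ctx G T S Q) {X : List V} {a v : V} (h : LP G (X ++ [a]))
    {t : W} (ha : t ∈ S a) (hv : t ∈ S v) : v ∈ X ++ [a] := by
  have h' := h.reverse
  rw [List.reverse_append] at h'
  have := LP.full_head C (Y := X.reverse) (a := a) (by simpa using h') ha hv
  simpa [or_comm] using this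

theorem conv_foot (C : Ctx G T S Q) (l : List V) (h : l.IsChain G.Adj) :
    Conv T {t | ∃ u ∈ l, t ∈ S u} := by
  induction l with
  | nil => intro s hs; simp at hs
  | cons a l ih =>
    cases l with
    | nil => simpa using C.conv a
    | cons b l =>
      rw [List.isChain_cons_cons] at h
      obtain ⟨c, hc1, hc2⟩ := (C.adj a b h.1.ne).1 h.1
      have := (C.conv a).union (ih h.2) hc1 ⟨b, by simp, hc2⟩
      convert this using 1
      ext t
      simp

theorem exists_transition (P : V → Prop) (l : List V) (h1 : ∃ f ∈ l, P f) (h2 : ∃ f ∈ l, ¬ P f) :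
    ∃ X a b Y, l = X ++ a :: b :: Y ∧ ((P a ∧ ¬ P b) ∨ (¬ P a ∧ P b)) := by
  induction l with
  | nil => simp at h1
  | cons a l ih =>
    cases l with
    | nil => simp at h1 h2; exact absurd h1 h2
    | cons b l =>
      by_cases hab : P a ↔ P b
      · obtain ⟨X, c, d, Y, h, h'⟩ := ih
          (by obtain ⟨f, hf, hP⟩ := h1
              rcases List.mem_cons.1 hf with rfl | hf
              · exact ⟨b, by simp, hab.1 hP⟩
              · exact ⟨f, hf, hP⟩)
          (by obtain ⟨f, hf, hP⟩ := h2
              rcases List.mem_cons.1 hf with rfl | hf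
              · exact ⟨b, by simp, fun h => hP (hab.2 h)⟩
              · exact ⟨f, hf, hP⟩)
        exact ⟨a :: X, c, d, Y, by simp [h], h'⟩
      · exact ⟨[], a, b, l, rfl, by tauto⟩

theorem Ctx.disj [Finite W] [Nonempty V] (C : Ctx G T S Q) {t0 : W} (h0 : t0 ∉ Q) :
    ∃ v, ∀ l, LP G l → v ∉ l → (∃ w ∈ l, ¬ Leg S Q w) →
      ∀ f ∈ l, Leg S Q f → ∀ t ∈ S f, ¬ SameLeg T Q t0 t := by
  obtain ⟨z, hz⟩ := C.exists_gate t0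
  obtain ⟨ts, hts⟩ := C.leg_path h0 hz
  have : ∃ v, ∀ u, z ∈ S u → z ∈ S v ∧ ∀ t, TBtw T z t ts → t ∈ S u → t ∈ S v := by
    by_cases hb : ∃ v0, z ∈ S v0
    · obtain ⟨v0, hv0⟩ := hb
      obtain ⟨v, hv, h⟩ := C.pl1 z ts hv0
      exact ⟨v, fun u hu => ⟨hv, h u hu⟩⟩
    · push Not at hb
      exact ⟨Classical.arbitrary V, fun u hu => absurd hu (hb u)⟩
  obtain ⟨v, hv⟩ := this
  refine ⟨v, fun l hl hvl ⟨w, hw, hwl⟩ f hf hfl t ht hst => hvl ?_⟩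
  have key : ∀ f w t, Leg S Q f → (∃ t ∈ S f, SameLeg T Q t0 t) →
      ¬ (Leg S Q w ∧ ∃ t ∈ S w, SameLeg T Q t0 t) → t ∈ S f → t ∈ S w → t ∈ S v := by
    intro f w t hf ⟨t1, ht1, hs1⟩ hw htf htw
    have hs : SameLeg T Q t0 t := hs1.trans (hf.sameLeg C ht1 htf)
    have hwn : ¬ Leg S Q w := fun h => hw ⟨h, t, htw, hs⟩
    unfold Leg at hwn
    push Not at hwn
    obtain ⟨q, hqw, hq⟩ := hwn
    have hzw : z ∈ S w := C.conv w t htw q hqw z ((hz.congr hs).2 q hq)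
    exact (hv w hzw).2 t (hts t hs) htw
  obtain ⟨X, a, b, Y, rfl, hab⟩ := exists_transition
    (fun f => Leg S Q f ∧ ∃ t ∈ S f, SameLeg T Q t0 t) l ⟨f, hf, hfl, t, ht, hst⟩
    ⟨w, hw, fun h => hwl h.1⟩
  have hadj : G.Adj a b := ((List.isChain_append_cons_cons).1 hl.1).2.1
  obtain ⟨c, hca, hcb⟩ := (C.adj a b hadj.ne).1 hadj
  rcases hab with ⟨h, h'⟩ | ⟨h, h'⟩
  · exact hl.full C hca hcb (key a b c h.1 h.2 h' hca hcb)
  · exact hl.full C hca hcb (key b a c h'.1 h'.2 h hcb hca)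

end ListPart
section StepPart
variable {V W : Type} {G : SimpleGraph V} {T : SimpleGraph W} {S : V → Set W} {Q : Set W}

theorem LP.ne_nil [Nonempty V] {l : List V} (h : LP G l) : l ≠ [] := by
  rintro rfl
  have := h.2.2 [Classical.arbitrary V] (by simp) (by simp)
  simp at this

theorem half_list {l : List V} (h1 : l.IsChain G.Adj) (h2 : l.Nodup) {v : V} (hv : v ∈ l) :
    ∃ H, (v :: H).IsChain G.Adj ∧ (v :: H).Nodup ∧ (∀ x ∈ v :: H, x ∈ l) ∧
      l.length + 1 ≤ 2 * (H.length + 1) := by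
  obtain ⟨X, Y, rfl⟩ := List.mem_iff_append.1 hv
  by_cases hle : X.length ≤ Y.length
  · refine ⟨Y, (List.isChain_split.1 h1).2, (List.nodup_append'.1 h2).2.1, ?_, ?_⟩
    · intro x hx; exact List.mem_append_right _ hx
    · simp; omega
  · refine ⟨X.reverse, ?_, ?_, ?_, ?_⟩
    · have := isChain_adj_reverse (List.isChain_split.1 h1).1
      simpa using this
    · have : (X ++ [v]).Nodup := by
        have h3 : (X ++ [v] ++ Y).Nodup := by simpa using h2
        exact (List.nodup_append'.1 h3).1
      have := List.nodup_reverse.2 this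
      simpa using this
    · intro x hx; simp at hx ⊢; tauto
    · simp; omega

theorem LP.inter [Nonempty V] (hconn : G.Connected) {l1 l2 : List V} (h1 : LP G l1)
    (h2 : LP G l2) : ∃ u ∈ l1, u ∈ l2 := by
  classical
  by_contra hdis
  push Not at hdis
  have hex : ∃ n, ∃ u ∈ l1, ∃ v ∈ l2, ∃ p : G.Walk u v, p.length = n := by
    obtain ⟨u, hu⟩ := List.exists_mem_of_ne_nil _ h1.ne_nil
    obtain ⟨v, hv⟩ := List.exists_mem_of_ne_nil _ h2.ne_nil
    obtain ⟨p⟩ := hconn.preconnected u v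
    exact ⟨_, u, hu, v, hv, p, rfl⟩
  obtain ⟨u, hu, v, hv, p, hp⟩ := Nat.find_spec hex
  have hmin : ∀ u' ∈ l1, ∀ v' ∈ l2, ∀ p' : G.Walk u' v', p.length ≤ p'.length := by
    intro u' hu' v' hv' p'
    rw [hp]
    exact Nat.find_min' hex ⟨u', hu', v', hv', p', rfl⟩
  have hpp : p.IsPath := by
    have := hmin u hu v hv p.bypass
    have h4 : p.bypass = p := Walk.bypass_eq_self_of_length_le_length_bypass p this
    rw [← h4]; exact p.bypass_isPath
  have hA : ∀ x ∈ p.support, x ∈ l1 → x = u := by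
    intro x hx hx1
    have := hmin x hx1 v hv (p.dropUntil x hx)
    have h5 := congrArg Walk.length (p.take_spec hx)
    rw [Walk.length_append] at h5
    have h6 : (p.takeUntil x hx).length = 0 := by omega
    exact (Walk.eq_of_length_eq_zero h6).symm
  have hB : ∀ x ∈ p.support, x ∈ l2 → x = v := by
    intro x hx hx1
    have := hmin u hu x hx1 (p.takeUntil x hx)
    have h5 := congrArg Walk.length (p.take_spec hx)
    rw [Walk.length_append] at h5
    have h6 : (p.dropUntil x hx).length = 0 := by omega
    exact (Walk.eq_of_length_eq_zero h6)
  obtain ⟨H1, c1, n1, s1, len1⟩ := half_list h1.1 h1.2.1 hu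
  obtain ⟨H2, c2, n2, s2, len2⟩ := half_list h2.1 h2.2.1 hv
  have huv : u ≠ v := fun h => hdis u hu (h ▸ hv)
  cases p with
  | nil => exact huv rfl
  | @cons _ w _ hadj p =>
    rw [Walk.support_cons] at hA hB
    rw [Walk.isPath_def, Walk.support_cons] at hpp
    have hps : p.support = p.support.dropLast ++ [v] := by
      conv_lhs => rw [← List.dropLast_append_getLast p.support_ne_nil]
      rw [Walk.getLast_support]
    have pc : p.support.IsChain G.Adj := Walk.isChain_adj_support p
    have hcp : (u :: p.support).IsChain G.Adj := by
      have := Walk.isChain_adj_support (Walk.cons hadj p)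
      rwa [Walk.support_cons] at this
    set M := p.support.dropLast
    rw [hps] at hpp hcp hA hB
    have e1 : (H1.reverse ++ u :: (M ++ v :: H2)).IsChain G.Adj := by
      rw [List.isChain_split]
      constructor
      · have := isChain_adj_reverse c1
        simpa using this
      · rw [← List.cons_append, List.isChain_split]
        exact ⟨by simpa using hcp, c2⟩
    have e2 : (H1.reverse ++ u :: (M ++ v :: H2)).Nodup := by
      simp only [List.nodup_append', List.nodup_cons, List.mem_append, List.mem_cons,
        List.nodup_reverse, List.disjoint_left, List.mem_reverse] at *
      refine ⟨n1.2, ⟨?_, ?_⟩, ?_⟩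
      · rintro (h | rfl | h)
        · exact hpp.1 (Or.inl h)
        · exact huv rfl
        · exact hdis u hu (s2 u (Or.inr h))
      · refine ⟨hpp.2.1, n2, ?_⟩
        rintro x hx (rfl | hx')
        · exact hpp.2.2.2 hx (by simp)
        · have := hB x (Or.inr (Or.inl hx)) (s2 x (Or.inr hx'))
          subst this
          exact n2.1 hx'
      · rintro x hx (rfl | h | rfl | h)
        · exact n1.1 hx
        · have := hA x (Or.inr (Or.inl h)) (s1 x (Or.inr hx))
          subst this
          exact n1.1 hx
        · exact hdis x (s1 x (Or.inr hx)) hv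
        · exact hdis x (s1 x (Or.inr hx)) (s2 x (Or.inr h))
    have e3 := h1.2.2 _ e1 e2
    have e4 := h2.2.2 _ e1 e2
    simp at e3 e4
    omega

/-- Step 3. -/
theorem Ctx.step3 [Finite W] [Nonempty V] (C : Ctx G T S Q) (hconn : G.Connected)
    (hex : ∃ l, LP G l) (hne : ∀ u, (S u).Nonempty) :
    ∃ y ∈ Q, ∃ v1 v2, ∀ l, LP G l → v1 ∉ l → v2 ∉ l → ∃ u ∈ l, y ∈ S u := by
  obtain ⟨x, hx⟩ := helly C.tree {l | LP G l} hex (fun l => {t | ∃ u ∈ l, t ∈ S u})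
    (fun l hl => conv_foot C l hl.1) (by
      intro l1 h1 l2 h2
      obtain ⟨u, hu1, hu2⟩ := LP.inter hconn h1 h2
      obtain ⟨t, ht⟩ := hne u
      exact ⟨t, ⟨u, hu1, ht⟩, ⟨u, hu2, ht⟩⟩)
  by_cases hxQ : x ∈ Q
  · exact ⟨x, hxQ, Classical.arbitrary V, Classical.arbitrary V, fun l hl _ _ => hx l hl⟩
  obtain ⟨z, hz⟩ := C.exists_gate x
  obtain ⟨ts, hts⟩ := C.leg_path hxQ hz
  obtain ⟨l0, hl0⟩ := hex
  obtain ⟨v0, -, hv0⟩ := hx l0 hl0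
  obtain ⟨v1, v2, hv1, hv2, hcov⟩ := C.pl x z ts hv0
  refine ⟨z, hz.1, v1, v2, fun l hl h1 h2 => ?_⟩
  obtain ⟨u, hul, hxu⟩ := hx l hl
  refine ⟨u, hul, ?_⟩
  obtain ⟨X, Y, rfl⟩ := List.mem_iff_append.1 hul
  rcases List.eq_nil_or_concat X with rfl | ⟨X, s, rfl⟩
  · exact absurd (LP.full_head C hl hxu hv1) h1
  · have hrw : X.concat s ++ u :: Y = X ++ s :: u :: Y := by simp
    rw [hrw] at hl h1 h2
    have hadj : G.Adj s u := ((List.isChain_append_cons_cons).1 hl.1).2.1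
    obtain ⟨t, hts', htu⟩ := (C.adj s u hadj.ne).1 hadj
    by_cases hsl : SameLeg T Q x t
    · rcases hcov u hxu t (hts t hsl) htu with h | h
      · exact absurd (hl.full C hts' htu h) h1
      · exact absurd (hl.full C hts' htu h) h2
    · exact C.conv u x hxu t htu z (hz.of_not hsl)

/-- the properties of the pair `a, b` -/
structure Cover (S : V → Set W) (Q : Set W) (y : W) (a b : V) : Prop where
  memQ : y ∈ Q
  mema : y ∈ S a
  memb : y ∈ S b
  cov : ∀ u, y ∈ S u → ∀ t ∈ Q, t ∈ S u → t ∈ S a ∨ t ∈ S b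

theorem Cover.leg_aux [Finite W] (C : Ctx G T S Q) {y : W} {a b : V} (K : Cover S Q y a b)
    {l X Y : List V} {s u : V} (hl : LP G l) (ha : a ∉ l) (hb : b ∉ l) (hu : y ∈ S u)
    (he : l = X ++ s :: u :: Y ∨ l = X ++ u :: s :: Y) : Leg S Q s := by
  have hadj : G.Adj u s := by
    rcases he with rfl | rfl
    · exact ((List.isChain_append_cons_cons).1 hl.1).2.1.symm
    · exact ((List.isChain_append_cons_cons).1 hl.1).2.1
  have full : ∀ t, t ∈ Q → t ∈ S u → t ∈ S s → False := by
    intro t htQ htu hts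
    rcases K.cov u hu t htQ htu with h | h
    · apply ha
      rcases he with rfl | rfl
      · exact hl.full C hts htu h
      · exact hl.full C htu hts h
    · apply hb
      rcases he with rfl | rfl
      · exact hl.full C hts htu h
      · exact hl.full C htu hts h
  intro q hqs hq
  obtain ⟨t, htu, hts⟩ := (C.adj u s hadj.ne).1 hadj
  obtain ⟨z, hz⟩ := C.exists_gate t
  exact full z hz.1 (C.conv u t htu y hu z (hz.2 y K.memQ))
    (C.conv s t hts q hqs z (hz.2 q hq))

end StepPart
section FinalPart
variable {V W : Type} {G : SimpleGraph V} {T : SimpleGraph W} {S : V → Set W} {Q : Set W}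

/-- a run of leg vertices starting at a leg containing `t0` stays in that leg -/
theorem leg_run (C : Ctx G T S Q) (F : List V) {f : V} (hc : (f :: F).IsChain G.Adj)
    (hF : ∀ g ∈ f :: F, Leg S Q g) {t0 : W} (h0 : t0 ∈ S f) :
    ∀ g ∈ f :: F, ∀ t ∈ S g, SameLeg T Q t0 t := by
  induction F generalizing f t0 with
  | nil =>
    intro g hg t ht
    rw [List.mem_singleton] at hg
    subst hg
    exact (hF g (by simp)).sameLeg C h0 ht
  | cons f2 F ih =>
    rw [List.isChain_cons_cons] at hc
    obtain ⟨c, hc1, hc2⟩ := (C.adj f f2 hc.1.ne).1 hc.1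
    intro g hg t ht
    rcases List.mem_cons.1 hg with rfl | hg
    · exact (hF g (by simp)).sameLeg C h0 ht
    · exact ((hF f (by simp)).sameLeg C h0 hc1).trans
        (ih hc.2 (fun g hg => hF g (List.mem_cons_of_mem _ hg)) hc2 g hg t ht)

theorem pattern_z [Finite W] (C : Ctx G T S Q) {y : W} (hy : y ∈ Q) {u f e : V} {F : List V}
    (hu : y ∈ S u) (hc : (u :: (f :: F) ++ [e]).IsChain G.Adj) (hF : ∀ g ∈ f :: F, Leg S Q g)
    (he : ¬ Leg S Q e) : ∃ z ∈ Q, z ∈ S u ∧ z ∈ S e := by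
  rw [List.cons_append, List.cons_append, List.isChain_cons_cons] at hc
  obtain ⟨t0, h1, h2⟩ := (C.adj u f hc.1.ne).1 hc.1
  have hcf : (f :: F).IsChain G.Adj := by
    have := hc.2
    rw [← List.cons_append] at this
    exact (List.isChain_append.1 this).1
  obtain ⟨z, hz⟩ := C.exists_gate t0
  refine ⟨z, hz.1, C.conv u t0 h1 y hu z (hz.2 y hy), ?_⟩
  obtain ⟨X, g, hXg⟩ : ∃ X g, f :: F = X ++ [g] :=
    ⟨_, _, (List.dropLast_append_getLast (List.cons_ne_nil f F)).symm⟩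
  have hge : G.Adj g e := by
    have := hc.2
    rw [← List.cons_append, hXg, List.append_assoc, List.singleton_append,
      List.isChain_append_cons_cons] at this
    exact this.2.1
  obtain ⟨t, htg, hte⟩ := (C.adj g e hge.ne).1 hge
  have hs := leg_run C F hcf hF h2 g (by rw [hXg]; simp) t htg
  unfold Leg at he
  push Not at he
  obtain ⟨q, hqe, hq⟩ := he
  exact C.conv e t hte q hqe z ((hz.congr hs).2 q hq)

theorem exists_max_of_bounded {P : ℕ → Prop} (B : ℕ) (hB : ∀ n, P n → n ≤ B) (h : ∃ n, P n) :
    ∃ n, P n ∧ ∀ m, P m → m ≤ n := by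
  classical
  obtain ⟨n, hn⟩ := h
  exact ⟨Nat.findGreatest P B, Nat.findGreatest_spec (hB n hn) hn,
    fun m hm => Nat.le_findGreatest (hB m hm) hm⟩

/-- `l = X ++ u :: F ++ e :: Y` with `u` in the bag of `y`, `F` legs, `e` not a leg -/
def Pat (S : V → Set W) (Q : Set W) (y : W) (l X : List V) (u : V) (F : List V) (e : V)
    (Y : List V) : Prop :=
  l = X ++ u :: F ++ e :: Y ∧ y ∈ S u ∧ (∀ f ∈ F, Leg S Q f) ∧ ¬ Leg S Q e

theorem connector (C : Ctx G T S Q) {y : W} {a b : V} (K : Cover S Q y a b) {e e' : V}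
    {z z' : W} (hz : z ∈ S a ∨ z ∈ S b) (hz' : z' ∈ S a ∨ z' ∈ S b) (he : z ∈ S e)
    (he' : z' ∈ S e') (hae : a ≠ e) (hbe : b ≠ e) (hae' : a ≠ e') (hbe' : b ≠ e') :
    ∃ M : List V, M.Nodup ∧ (∀ x ∈ M, x = a ∨ x = b) ∧ (e :: (M ++ [e'])).IsChain G.Adj := by
  have ad : ∀ {c d : V} {t : W}, c ≠ d → t ∈ S c → t ∈ S d → G.Adj c d :=
    fun h h1 h2 => (C.adj _ _ h).2 ⟨_, h1, h2⟩
  by_cases hab : a = b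
  · subst hab
    rw [or_self] at hz hz'
    refine ⟨[a], by simp, by simp, ?_⟩
    simp only [List.singleton_append, List.isChain_cons_cons, List.isChain_singleton, and_true]
    exact ⟨ad hae.symm he hz, ad hae' hz' he'⟩
  rcases hz with hz | hz <;> rcases hz' with hz' | hz'
  · refine ⟨[a], by simp, by simp, ?_⟩
    simp only [List.singleton_append, List.isChain_cons_cons, List.isChain_singleton, and_true]
    exact ⟨ad hae.symm he hz, ad hae' hz' he'⟩
  · refine ⟨[a, b], by simp [hab], by simp, ?_⟩
    simp only [List.cons_append, List.nil_append, List.isChain_cons_cons,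
      List.isChain_singleton, and_true]
    exact ⟨ad hae.symm he hz, ad hab K.mema K.memb, ad hbe' hz' he'⟩
  · refine ⟨[b, a], by simp [Ne.symm hab], by simp [or_comm], ?_⟩
    simp only [List.cons_append, List.nil_append, List.isChain_cons_cons,
      List.isChain_singleton, and_true]
    exact ⟨ad hbe.symm he hz, ad (Ne.symm hab) K.memb K.mema, ad hae' hz' he'⟩
  · refine ⟨[b], by simp, by simp, ?_⟩
    simp only [List.singleton_append, List.isChain_cons_cons, List.isChain_singleton, and_true]
    exact ⟨ad hbe.symm he hz, ad hbe' hz' he'⟩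

theorem Pat.ne_nil [Finite W] (C : Ctx G T S Q) {y : W} {a b : V} (K : Cover S Q y a b)
    {l X F Y : List V} {u e : V} (hl : LP G l) (ha : a ∉ l) (hb : b ∉ l)
    (hP : Pat S Q y l X u F e Y) : F ≠ [] := by
  rintro rfl
  obtain ⟨rfl, h1, h2, h3⟩ := hP
  refine h3 (K.leg_aux C hl ha hb h1 (X := X) (Y := Y) (Or.inr ?_))
  simp

theorem Pat.exists_z [Finite W] (C : Ctx G T S Q) {y : W} {a b : V} (K : Cover S Q y a b)
    {l X F Y : List V} {u e : V} (hl : LP G l) (ha : a ∉ l) (hb : b ∉ l)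
    (hP : Pat S Q y l X u F e Y) : ∃ z, (z ∈ S a ∨ z ∈ S b) ∧ z ∈ S e := by
  have hne := hP.ne_nil C K hl ha hb
  obtain ⟨rfl, h1, h2, h3⟩ := hP
  cases F with
  | nil => exact absurd rfl hne
  | cons f F =>
    have hc : (u :: (f :: F) ++ [e]).IsChain G.Adj := by
      have := hl.1
      have h4 := (List.isChain_split.1 this).1
      rw [List.append_assoc] at h4
      exact (List.isChain_append.1 h4).2.1
    obtain ⟨z, hz, hzu, hze⟩ := pattern_z C K.memQ h1 hc h2 h3
    exact ⟨z, K.cov u h1 z hz hzu, hze⟩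

set_option maxHeartbeats 1000000 in
theorem step6 [Finite V] [Finite W] [Nonempty V] (C : Ctx G T S Q) {y : W} {a b : V}
    (K : Cover S Q y a b) :
    ∃ v1 v2 v3 : V, ∀ l, LP G l → a ∉ l → b ∉ l → v1 ∉ l → v2 ∉ l → v3 ∉ l →
      ∀ X u F e Y, ¬ Pat S Q y l X u F e Y := by
  classical
  have := Fintype.ofFinite V
  by_cases hex : ∃ n, ∃ l X u F e Y, LP G l ∧ a ∉ l ∧ b ∉ l ∧ Pat S Q y l X u F e Y ∧
      F.length = n
  swap
  · push Not at hex
    let v := Classical.arbitrary V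
    exact ⟨v, v, v, fun l hl ha hb _ _ _ X u F e Y hP => hex F.length l X u F e Y hl ha hb hP rfl⟩
  obtain ⟨n, ⟨l', X', u', F', e', Y', hl', ha', hb', hP', hn⟩, hmax⟩ :=
    exists_max_of_bounded (Fintype.card V) (by
      rintro n ⟨l, X, u, F, e, Y, hl, -, -, hP, rfl⟩
      have h1 := hl.2.1.length_le_card
      rw [hP.1] at h1
      simp at h1
      omega) hex
  have hne := hP'.ne_nil C K hl' ha' hb'
  obtain ⟨z', hz', hze'⟩ := hP'.exists_z C K hl' ha' hb'
  obtain ⟨hle, hyu', hF', hne'⟩ := hP'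
  cases F' with
  | nil => exact absurd rfl hne
  | cons f0 F' =>
  have hc' : (u' :: (f0 :: F') ++ [e']).IsChain G.Adj := by
    have := hl'.1
    rw [hle] at this
    have h4 := (List.isChain_split.1 this).1
    rw [List.append_assoc] at h4
    exact (List.isChain_append.1 h4).2.1
  have hc0 := hc'
  rw [List.cons_append, List.cons_append, List.isChain_cons_cons] at hc0
  obtain ⟨t0, ht0u, ht0f⟩ := (C.adj u' f0 hc0.1.ne).1 hc0.1
  have hcf : (f0 :: F').IsChain G.Adj := by
    have := hc0.2
    rw [← List.cons_append] at this
    exact (List.isChain_append.1 this).1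
  have hrun := leg_run C F' hcf hF' ht0f
  have ht0Q : t0 ∉ Q := hF' f0 (by simp) t0 ht0f
  obtain ⟨v, hv⟩ := C.disj ht0Q
  refine ⟨u', e', v, ?_⟩
  intro l hl ha hb hu'l he'l hvl X u F e Y hP
  obtain ⟨z, hz, hze⟩ := hP.exists_z C K hl ha hb
  have hlen : F.length ≤ n := hmax _ ⟨l, X, u, F, e, Y, hl, ha, hb, hP, rfl⟩
  obtain ⟨hll, hyu, hF, hnl⟩ := hP
  have hul : u ∈ l := by rw [hll]; simp
  have hel : e ∈ l := by rw [hll]; simp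
  have hu'l' : u' ∈ l' := by rw [hle]; simp
  have he'l' : e' ∈ l' := by rw [hle]; simp
  have hF'l' : ∀ g ∈ f0 :: F', g ∈ l' := by
    intro g hg; rw [hle]; simp only [List.mem_append, List.mem_cons] at hg ⊢; tauto
  have hF'l : ∀ g ∈ f0 :: F', g ∉ l := by
    intro g hg hgl
    have hnLu : ¬ Leg S Q u := fun h => h y hyu K.memQ
    have hnonempty : ∃ t, t ∈ S g := by
      obtain ⟨X1, Y1, hXY⟩ := List.mem_iff_append.1 hg
      have hgc : (X1 ++ g :: (Y1 ++ [e'])).IsChain G.Adj := by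
        have := hc0.2
        rw [← List.cons_append, hXY] at this
        simpa using this
      have hgc' := (List.isChain_split.1 hgc).2
      cases hY : Y1 ++ [e'] with
      | nil => simp at hY
      | cons c Z =>
        rw [hY, List.isChain_cons_cons] at hgc'
        obtain ⟨t, ht, -⟩ := (C.adj g c hgc'.1.ne).1 hgc'.1
        exact ⟨t, ht⟩
    obtain ⟨t, ht⟩ := hnonempty
    exact hv l hl hvl ⟨u, hul, hnLu⟩ g hgl (hF' g hg) t ht (hrun g hg t ht)
  have hane : ∀ {c : V} {m : List V}, a ∉ m → c ∈ m → a ≠ c := fun h h' h'' => h (h'' ▸ h')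
  have hbne : ∀ {c : V} {m : List V}, b ∉ m → c ∈ m → b ≠ c := fun h h' h'' => h (h'' ▸ h')
  obtain ⟨M, hM1, hM2, hM3⟩ := connector C K hz' hz hze' hze (hane ha' he'l')
    (hbne hb' he'l') (hane ha hel) (hbne hb hel)
  have huu' : u ≠ u' := fun h => hu'l (h ▸ hul)
  have hMl : ∀ x ∈ M, x ∉ l ∧ x ∉ l' := by
    intro x hx
    rcases hM2 x hx with rfl | rfl
    · exact ⟨ha, ha'⟩
    · exact ⟨hb, hb'⟩
  have cl := hl.1
  have nl := hl.2.1
  have nl' := hl'.2.1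
  rw [hll] at cl nl
  rw [hle] at nl'
  have c1 : (X ++ [u]).IsChain G.Adj := by
    rw [List.append_assoc] at cl
    exact (List.isChain_split.1 cl).1
  have c2 : (e :: Y).IsChain G.Adj := (List.isChain_split.1 cl).2
  set L := X ++ u :: (u' :: (f0 :: F') ++ e' :: (M ++ e :: Y)) with hL
  have hLc : L.IsChain G.Adj := by
    rw [hL, List.isChain_split]
    refine ⟨c1, ?_⟩
    rw [List.cons_append, List.isChain_cons_cons]
    refine ⟨(C.adj u u' huu').2 ⟨y, hyu, hyu'⟩, ?_⟩
    rw [← List.cons_append, List.isChain_split]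
    refine ⟨hc', ?_⟩
    rw [← List.cons_append, List.isChain_split]
    exact ⟨by simpa using hM3, c2⟩
  have hLn : L.Nodup := by
    have n1 : (X ++ u :: (e :: Y)).Nodup := by
      refine nl.sublist ?_
      simp
    have n2 : ((u' :: (f0 :: F') ++ [e']) ++ M).Nodup := by
      have n3 : (u' :: (f0 :: F') ++ [e']).Nodup := by
        refine nl'.sublist ?_
        have : X' ++ u' :: (f0 :: F') ++ e' :: Y' = X' ++ ((u' :: (f0 :: F') ++ [e']) ++ Y') := by
          simp
        rw [this]
        exact (List.sublist_append_left _ _).trans (List.sublist_append_right _ _)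
      refine List.Nodup.append n3 hM1 ?_
      intro x hx hxM
      refine (hMl x hxM).2 ?_
      simp only [List.mem_append, List.mem_cons] at hx
      rcases hx with (rfl | h) | h
      · exact hu'l'
      · exact hF'l' x (List.mem_cons.2 h)
      · simp at h; rw [h]; exact he'l'
    have hperm : L.Perm ((X ++ u :: (e :: Y)) ++ ((u' :: (f0 :: F') ++ [e']) ++ M)) := by
      have e1 : L = (X ++ [u]) ++ ((u' :: (f0 :: F') ++ [e'] ++ M) ++ (e :: Y)) := by
        simp [hL]
      have e2 : (X ++ u :: (e :: Y)) ++ ((u' :: (f0 :: F') ++ [e']) ++ M)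
          = (X ++ [u]) ++ ((e :: Y) ++ (u' :: (f0 :: F') ++ [e'] ++ M)) := by
        simp
      rw [e1, e2]
      exact List.Perm.append_left _ List.perm_append_comm
    rw [hperm.nodup_iff]
    refine List.Nodup.append n1 n2 ?_
    intro x hx hx2
    have hxl : x ∈ l := by
      rw [hll]
      simp only [List.mem_append, List.mem_cons] at hx ⊢
      tauto
    simp only [List.mem_append, List.mem_cons] at hx2
    rcases hx2 with ((rfl | h) | h) | h
    · exact hu'l hxl
    · exact hF'l x (List.mem_cons.2 h) hxl
    · simp at h; rw [h] at hxl; exact he'l hxl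
    · exact (hMl x h).1 hxl
  have hfin := hl.2.2 L hLc hLn
  rw [hll] at hfin
  simp [hL] at hfin hn
  omega

theorem exists_first_not (P : V → Prop) (l : List V) (h : ∃ f ∈ l, ¬ P f) :
    ∃ F e Y, l = F ++ e :: Y ∧ (∀ f ∈ F, P f) ∧ ¬ P e := by
  induction l with
  | nil => simp at h
  | cons a l ih =>
    by_cases ha : P a
    · obtain ⟨F, e, Y, h1, h2, h3⟩ := ih (by
        obtain ⟨f, hf, hP⟩ := h
        rcases List.mem_cons.1 hf with rfl | hf
        · exact absurd ha hP
        · exact ⟨f, hf, hP⟩)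
      refine ⟨a :: F, e, Y, by simp [h1], ?_, h3⟩
      intro f hf
      rcases List.mem_cons.1 hf with rfl | hf
      · exact ha
      · exact h2 f hf
    · exact ⟨[], a, l, rfl, by simp, ha⟩

theorem step7 [Finite V] [Finite W] [Nonempty V] (C : Ctx G T S Q) {y : W} {a b : V}
    (K : Cover S Q y a b) (hSne : ∀ u, (S u).Nonempty) :
    ∃ A : List V, A.length ≤ 7 ∧ ∀ l, LP G l → (∃ u ∈ l, y ∈ S u) → ∃ v ∈ A, v ∈ l := by
  classical
  have := Fintype.ofFinite V
  obtain ⟨v1, v2, v3, hno⟩ := step6 C K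
  let U : List V → Prop := fun l => LP G l ∧ ∀ v ∈ [a, b, v1, v2, v3], v ∉ l
  have hUY : ∀ X u Y, U (X ++ u :: Y) → y ∈ S u → Y ≠ [] ∧ ∀ f ∈ Y, Leg S Q f := by
    intro X u Y hU hu
    have h2 := hU.2
    simp only [List.mem_cons, List.not_mem_nil, or_false, forall_eq_or_imp, forall_eq] at h2
    constructor
    · rintro rfl
      exact h2.1 (hU.1.full_last C hu K.mema)
    · by_contra hcon
      push Not at hcon
      obtain ⟨F, e, Z, rfl, hF, he⟩ := exists_first_not (Leg S Q) Y hcon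
      exact hno _ hU.1 h2.1 h2.2.1 h2.2.2.1 h2.2.2.2.1 h2.2.2.2.2 X u F e Z
        ⟨by simp, hu, hF, he⟩
  by_cases hex : ∃ n, ∃ X u Y, U (X ++ u :: Y) ∧ y ∈ S u ∧ Y.length = n
  swap
  · push Not at hex
    refine ⟨[a, b, v1, v2, v3], by simp, fun l hl ⟨u, hul, hu⟩ => ?_⟩
    by_contra hcon
    push Not at hcon
    obtain ⟨X, Y, rfl⟩ := List.mem_iff_append.1 hul
    exact hex _ X u Y ⟨hl, hcon⟩ hu rfl
  obtain ⟨n, ⟨X0, u0, Y0, hU0, hu0, hn⟩, hmax⟩ :=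
    exists_max_of_bounded (Fintype.card V) (by
      rintro n ⟨X, u, Y, hU, hu, rfl⟩
      have h1 := hU.1.2.1.length_le_card
      simp at h1
      omega) hex
  obtain ⟨hY0, hleg0⟩ := hUY _ _ _ hU0 hu0
  cases Y0 with
  | nil => exact absurd rfl hY0
  | cons f0 Y0 =>
  have c0 : (u0 :: f0 :: Y0).IsChain G.Adj := (List.isChain_split.1 hU0.1.1).2
  have c0' := c0
  rw [List.isChain_cons_cons] at c0'
  obtain ⟨t0, ht0u, ht0f⟩ := (C.adj u0 f0 c0'.1.ne).1 c0'.1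
  have hrun := leg_run C Y0 c0'.2 hleg0 ht0f
  have ht0Q : t0 ∉ Q := hleg0 f0 (by simp) t0 ht0f
  obtain ⟨v, hv⟩ := C.disj ht0Q
  refine ⟨[a, b, v1, v2, v3] ++ [u0, v], by simp, fun l hl ⟨u, hul, hu⟩ => ?_⟩
  by_contra hcon
  push Not at hcon
  have hUl : U l := ⟨hl, fun w hw => hcon w (List.mem_append_left _ hw)⟩
  have hu0l : u0 ∉ l := hcon u0 (by simp)
  have hvl : v ∉ l := hcon v (by simp)
  obtain ⟨X, Y, hXY⟩ := List.mem_iff_append.1 hul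
  have hnL : ¬ Leg S Q u := fun h => h y hu K.memQ
  have hYl : ∀ g ∈ f0 :: Y0, g ∉ l := by
    intro g hg hgl
    obtain ⟨t, ht⟩ := hSne g
    exact hv l hl hvl ⟨u, hul, hnL⟩ g hgl (hleg0 g hg) t ht (hrun g hg t ht)
  have hlenY : Y.length ≤ n := hmax _ ⟨X, u, Y, hXY ▸ hUl, hu, rfl⟩
  have huu0 : u ≠ u0 := fun h => hu0l (h ▸ hul)
  have cl := hl.1
  have nl := hl.2.1
  rw [hXY] at cl nl
  have hLc : (X ++ u :: (u0 :: f0 :: Y0)).IsChain G.Adj := by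
    rw [List.isChain_split]
    exact ⟨(List.isChain_split.1 cl).1, List.isChain_cons_cons.2
      ⟨(C.adj u u0 huu0).2 ⟨y, hu, hu0⟩, c0⟩⟩
  have hLn : (X ++ u :: (u0 :: f0 :: Y0)).Nodup := by
    have e1 : X ++ u :: (u0 :: f0 :: Y0) = (X ++ [u]) ++ (u0 :: f0 :: Y0) := by simp
    have e2 : X ++ u :: Y = (X ++ [u]) ++ Y := by simp
    rw [e2] at nl
    rw [e1]
    refine List.Nodup.append (List.nodup_append'.1 nl).1
      (List.nodup_append'.1 hU0.1.2.1).2.1 ?_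
    intro x hx hx'
    have hxl : x ∈ l := by
      rw [hXY, e2]
      exact List.mem_append_left _ hx
    rcases List.mem_cons.1 hx' with rfl | hx'
    · exact hu0l hxl
    · exact hYl x hx' hxl
  have hfin := hl.2.2 _ hLc hLn
  rw [hXY] at hfin
  simp at hfin hn
  omega

end FinalPart
theorem LP.of_longest {V : Type} {G : SimpleGraph V} {a b : V} {p : G.Walk a b}
    (h : IsLongestPath G p) : LP G p.support := by
  refine ⟨p.isChain_adj_support, (Walk.isPath_def p).1 h.1, fun l hc hn => ?_⟩
  by_cases hl : l = []
  · simp [hl]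
  · have h1 : (Walk.ofSupport l hl hc).IsPath := by
      rw [Walk.isPath_def, Walk.support_ofSupport]; exact hn
    have h2 := h.2 _ _ _ h1
    rw [Walk.length_support]
    have h3 := Walk.length_support (Walk.ofSupport l hl hc)
    rw [Walk.support_ofSupport] at h3
    omega

theorem exists_transversal {V W : Type} [Fintype V] [Fintype W] (G : SimpleGraph V)
    (T : SimpleGraph W) (hconn : G.Connected)
    (R : TreeRep G T) (hcat : IsSubdividedCaterpillar T) :
    ∃ A : List V, A.length ≤ 9 ∧ ∀ l, LP G l → ∃ v ∈ A, v ∈ l := by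
  classical
  have hVne : Nonempty V := hconn.nonempty
  obtain ⟨hT, qa, qb, q, hq, hq3⟩ := hcat
  have C : Ctx G T R.S {x | x ∈ q.support} :=
    { tree := hT
      conv := fun u => conv_of_connected (R.subtree_connected u)
      adj := fun u v h => R.adj_iff u v h
      qconv := conv_support q
      qne := ⟨qa, q.start_mem_support⟩
      branch := hq3 }
  have hne : ∀ u, (R.S u).Nonempty := fun u => by
    obtain ⟨x⟩ := (R.subtree_connected u).nonempty
    exact ⟨x.1, x.2⟩
  by_cases hex : ∃ l, LP G l
  swap
  · push Not at hex
    exact ⟨[], by simp, fun l hl => absurd hl (hex l)⟩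
  obtain ⟨y, hyQ, v1, v2, h3⟩ := C.step3 hconn hex hne
  by_cases hb : ∃ v0, y ∈ R.S v0
  swap
  · push Not at hb
    refine ⟨[v1, v2], by simp, fun l hl => ?_⟩
    by_contra hcon
    push Not at hcon
    obtain ⟨u, -, hu⟩ := h3 l hl (hcon v1 (by simp)) (hcon v2 (by simp))
    exact hb u hu
  obtain ⟨v0, hv0⟩ := hb
  obtain ⟨a, b, ha, hb, hcov⟩ := C.pl y qa qb hv0
  have K : Cover R.S {x | x ∈ q.support} y a b :=
    ⟨hyQ, ha, hb, fun u hu t ht htu => hcov u hu t (btw_of_path hT.isAcyclic hq ht) htu⟩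
  obtain ⟨A, hA, hA'⟩ := step7 C K hne
  refine ⟨v1 :: v2 :: A, by simp; omega, fun l hl => ?_⟩
  by_cases e1 : v1 ∈ l
  · exact ⟨v1, by simp, e1⟩
  by_cases e2 : v2 ∈ l
  · exact ⟨v2, by simp, e2⟩
  obtain ⟨v, hv, hvl⟩ := hA' l hl (h3 l hl e1 e2)
  exact ⟨v, by simp [hv], hvl⟩

/-- If `G` is a connected chordal graph admitting a tree representation
whose host tree is a subdivided caterpillar, then `lpt(G) ≤ 26`. -/
theorem lpt_le_26_of_caterpillar {V W : Type} [Fintype V] [Fintype W] (G : SimpleGraph V)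
    (T : SimpleGraph W) (hconn : G.Connected) (hchordal : IsChordal G)
    (R : TreeRep G T) (hcat : IsSubdividedCaterpillar T) :
    lpt G ≤ 26 := by
  classical
  obtain ⟨A, hA, hA'⟩ := exists_transversal G T hconn R hcat
  have h1 : lpt G ≤ (A.toFinset : Set V).ncard := by
    apply Nat.sInf_le
    refine ⟨(A.toFinset : Set V), Finset.finite_toSet _, rfl, fun a b p hp => ?_⟩
    obtain ⟨v, hv, hvl⟩ := hA' _ (LP.of_longest hp)
    exact ⟨v, by simpa using hv, hvl⟩
  rw [Set.ncard_coe_finset] at h1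
  have h2 := A.toFinset_card_le
  omega
end

section
/- Let T be a tree rooted at r with k childless vertices. Then there exists a path P in T with r as an endpoint such that every component of T − V(P) contains at most k/2 childless vertices. -/
open SimpleGraph

/-- Let `T` be a tree rooted at `r` with `k` childless vertices. Then there
is a path `P = p` with `r` as an endpoint such that every component of `T − V(P)` contains
at most `k/2` childless vertices. -/
theorem tree_path_divide_leaves {W : Type} [Fintype W] (T : SimpleGraph W)
    (hT : T.IsTree) (r : W) (k : ℕ) (hk : {v : W | IsChildlessIn T r v}.ncard = k) :
    ∃ (b : W) (p : T.Walk r b), p.IsPath ∧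
      ∀ C : Set W, IsCompOf T {w : W | w ∉ p.support} C →
        2 * {v : W | v ∈ C ∧ IsChildlessIn T r v}.ncard ≤ k := by
  classical
  have hex : ∀ b : W, ∃ p : T.Walk r b, p.IsPath := fun b =>
    ⟨_, ((hT.1 r b).some.toPath).2⟩
  choose P hP using hex
  have huniq : ∀ (b : W) (p : T.Walk r b), p.IsPath → p = P b := fun b p hp =>
    congrArg Subtype.val (hT.2.path_unique ⟨p, hp⟩ ⟨P b, hP b⟩)
  have hlt : ∀ v y : W, v ∈ (P y).support → v ≠ y → (P v).length < (P y).length := by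
    intro v y hv hne
    rw [← huniq v _ ((hP y).takeUntil hv)]
    exact Walk.length_takeUntil_lt_length hv hne
  let L : Set W := {v : W | IsChildlessIn T r v}
  let D : W → Set W := fun x => {w | x ∈ (P w).support}
  have hne : ({b : W | k ≤ 2 * (D b ∩ L).ncard}).Nonempty := by
    refine ⟨r, ?_⟩
    have h1 : D r ∩ L = L := by
      ext w
      simp [D]
    have h2 : L.ncard = k := hk
    simp only [Set.mem_setOf_eq, h1, h2]
    omega
  obtain ⟨b, hb, hmax⟩ := Set.exists_max_image _ (fun b => (P b).length)
    (Set.toFinite _) hne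
  refine ⟨b, P b, hP b, ?_⟩
  rintro C ⟨hCne, hCs, hCc, hCcl⟩
  obtain ⟨x, hx, hmin⟩ := Set.exists_min_image C (fun b => (P b).length)
    (Set.toFinite _) hCne
  have hA : ∀ v ∈ (P x).support, v ∈ C → v = x := by
    intro v hv hvC
    by_contra hvx
    exact absurd (hlt v x hv hvx) (not_lt.mpr (hmin v hvC))
  -- the path to any `w ∈ C` goes through `x` and then stays in `C`
  have hB : ∀ w ∈ C, x ∈ (P w).support ∧
      ∀ v ∈ (P w).support, v ∈ (P x).support ∨ v ∈ C := by
    intro w hw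
    let s0 := (hCc.preconnected ⟨x, hx⟩ ⟨w, hw⟩).some.toPath
    let s : T.Walk x w := s0.1.map (Embedding.induce C).toHom
    have hs : s.IsPath := Walk.IsPath.map (Embedding.induce (G := T) C).injective s0.2
    have hsC : ∀ v ∈ s.support, v ∈ C := by
      intro v hv
      have hv2 : v ∈ (s0.1.map (Embedding.induce C).toHom).support := hv
      rw [Walk.support_map] at hv2
      obtain ⟨a, -, rfl⟩ := List.mem_map.1 hv2
      exact a.2
    have happ : ((P x).append s).IsPath := by
      rw [Walk.isPath_def, Walk.support_append, List.nodup_append]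
      have hsn := (Walk.isPath_def _).1 hs
      refine ⟨(Walk.isPath_def _).1 (hP x), hsn.tail, ?_⟩
      rintro a ha c hc rfl
      have := hA a ha (hsC a (List.mem_of_mem_tail hc))
      subst this
      rw [Walk.support_eq_cons] at hsn
      exact (List.nodup_cons.1 hsn).1 hc
    rw [← huniq w _ happ]
    refine ⟨?_, ?_⟩
    · rw [Walk.mem_support_append_iff]
      exact Or.inl (Walk.end_mem_support _)
    · intro v hv
      rw [Walk.mem_support_append_iff] at hv
      exact hv.imp id (hsC v)
  have hxb : x ∉ (P b).support := hCs hx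
  have hnil : ¬ (P x).Nil := by
    intro h
    have := h.eq
    subst this
    exact hxb (Walk.start_mem_support _)
  set u := (P x).penultimate with hu
  have hux : T.Adj u x := Walk.adj_penultimate hnil
  have hud : (P x).dropLast = P u := huniq _ _ (hP x).dropLast
  have hul : (P u).length + 1 = (P x).length := by
    rw [← hud]
    exact Walk.length_dropLast_add_one hnil
  have huC : u ∉ C := fun h => by
    have := hmin u h
    omega
  have hub : u ∈ (P b).support := by
    by_contra h
    exact huC (hCcl hx h hux.symm)
  by_cases hbu : u = b
  · have h1 : ¬ k ≤ 2 * (D x ∩ L).ncard := fun h => by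
      have := hmax x h
      rw [← hbu] at this
      omega
    have h2 : {v : W | v ∈ C ∧ IsChildlessIn T r v}.ncard ≤ (D x ∩ L).ncard :=
      Set.ncard_le_ncard (fun v hv => ⟨(hB v hv.1).1, hv.2⟩) (Set.toFinite _)
    omega
  · have hdisj : Disjoint {v : W | v ∈ C ∧ IsChildlessIn T r v} (D b ∩ L) := by
      rw [Set.disjoint_left]
      rintro w ⟨hwC, -⟩ ⟨hwD, -⟩
      have hbx : b ∈ (P x).support := by
        rcases (hB w hwC).2 b hwD with h | h
        · exact h
        · exact absurd (Walk.end_mem_support _) (hCs h)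
      have h1 := hlt u b hub hbu
      have h2 := hlt b x hbx (by rintro rfl; exact hxb (Walk.end_mem_support _))
      omega
    have h1 := Set.ncard_union_eq hdisj (Set.toFinite _) (Set.toFinite _)
    have h2 : ({v : W | v ∈ C ∧ IsChildlessIn T r v} ∪ (D b ∩ L)).ncard ≤ L.ncard := by
      refine Set.ncard_le_ncard ?_ (Set.toFinite _)
      rintro v (hv | hv)
      · exact hv.2
      · exact hv.2
    have h3 : L.ncard = k := hk
    have h4 : k ≤ 2 * (D b ∩ L).ncard := hb
    omega
end

section
/- If G is a connected chordal graph admitting a tree representation whose host tree is a subdivision of a star, then lpt(G) = 1; that is, some vertex of G belongs to every longest path of G. -/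
open SimpleGraph

namespace Substar

/-- Lists encoding paths of a graph. -/
def PL {V : Type} (G : SimpleGraph V) (l : List V) : Prop := l.IsChain G.Adj ∧ l.Nodup

/-- Lists encoding longest paths. -/
def LP {V : Type} (G : SimpleGraph V) (l : List V) : Prop :=
  PL G l ∧ ∀ l', PL G l' → l'.length ≤ l.length

section lists
variable {V : Type} {G : SimpleGraph V}

lemma PL.reverse {l : List V} (h : PL G l) : PL G l.reverse := by
  refine ⟨?_, List.nodup_reverse.2 h.2⟩
  rw [List.isChain_reverse]
  exact h.1.imp (fun _ _ h => h.symm)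

lemma LP.reverse {l : List V} (h : LP G l) : LP G l.reverse :=
  ⟨h.1.reverse, by simpa using h.2⟩

lemma LP.of_longest {a b : V} {p : G.Walk a b} (h : IsLongestPath G p) : LP G p.support := by
  refine ⟨⟨p.isChain_adj_support, h.1.support_nodup⟩, fun l hl => ?_⟩
  by_cases hne : l = []
  · subst hne; simp
  · have := h.2 _ _ (Walk.ofSupport l hne hl.1)
      (Walk.isPath_def _ |>.2 (by rw [Walk.support_ofSupport]; exact hl.2))
    rw [Walk.length_ofSupport] at this
    rw [Walk.length_support]
    omega

lemma PL.length_le [Fintype V] {l : List V} (h : PL G l) : l.length ≤ Fintype.card V :=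
  h.2.length_le_card

lemma exists_longest [Fintype V] [Nonempty V] :
    ∃ (a b : V) (p : G.Walk a b), IsLongestPath G p := by
  have key : ∃ n, (∃ (a b : V) (p : G.Walk a b), p.IsPath ∧ p.length = n) ∧
      ∀ m, (∃ (a b : V) (p : G.Walk a b), p.IsPath ∧ p.length = m) → m ≤ n := by
    have hb : ∀ m, (∃ (a b : V) (p : G.Walk a b), p.IsPath ∧ p.length = m) →
        m ≤ Fintype.card V := by
      rintro m ⟨a, b, p, hp, rfl⟩
      exact hp.length_lt.le
    classical
    have h0 : ∃ (a b : V) (p : G.Walk a b), p.IsPath ∧ p.length = 0 :=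
      ⟨Classical.arbitrary V, _, Walk.nil, by simp, rfl⟩
    exact ⟨_, Nat.findGreatest_spec
      (P := fun m => ∃ (a b : V) (p : G.Walk a b), p.IsPath ∧ p.length = m) (Nat.zero_le _) h0,
      fun m hm => Nat.le_findGreatest (hb m hm) hm⟩
  obtain ⟨n, ⟨a, b, p, hp, rfl⟩, hn⟩ := key
  exact ⟨a, b, p, hp, fun c d q hq => hn _ ⟨c, d, q, hq, rfl⟩⟩

lemma LP.no_insert {p q : List V} {a c v : V} (h : LP G (p ++ a :: c :: q))
    (hv : v ∉ p ++ a :: c :: q) (ha : G.Adj v a) (hc : G.Adj v c) : False := by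
  have : PL G (p ++ a :: v :: c :: q) := by
    obtain ⟨h1, h2⟩ := h.1
    refine ⟨?_, ?_⟩
    · rw [List.isChain_append_cons_cons] at h1 ⊢
      refine ⟨h1.1, ha.symm, ?_⟩
      rw [List.isChain_cons_cons]
      exact ⟨hc, h1.2.2⟩
    · rw [List.nodup_append] at h2 ⊢
      simp only [List.nodup_cons, List.mem_cons, List.mem_append] at *
      grind
  have := h.2 _ this
  simp at this

lemma LP.no_head {q : List V} {a v : V} (h : LP G (a :: q))
    (hv : v ∉ a :: q) (ha : G.Adj v a) : False := by
  have : PL G (v :: a :: q) :=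
    ⟨List.isChain_cons_cons.2 ⟨ha, h.1.1⟩, List.nodup_cons.2 ⟨hv, h.1.2⟩⟩
  have := h.2 _ this
  simp at this

lemma LP.no_last {q : List V} {a v : V} (h : LP G (q ++ [a]))
    (hv : v ∉ q ++ [a]) (ha : G.Adj v a) : False := by
  have h' := h.reverse
  rw [List.reverse_append] at h'
  exact LP.no_head h' (by simpa [and_comm] using hv) ha

lemma avoid_aux {B D : Set V} {v : V}
    (hcl : ∀ d ∈ D, ∀ u, G.Adj d u → u ∈ D ∨ u ∈ B)
    (hvB : ∀ b ∈ B, b ≠ v → G.Adj v b)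
    (hdom : ∀ b ∈ B, ∀ d ∈ D, G.Adj b d → G.Adj v d) :
    ∀ (q p : List V) (d : V), LP G (p ++ d :: q) → v ∉ p ++ d :: q → d ∈ D →
      ∀ b ∈ q, b ∈ B → False
  | [], _, _, _, _, _, b, hb, _ => by simp at hb
  | c :: q, p, d, hl, hv, hd, b, hb, hbB => by
    have hadj : G.Adj d c := (List.isChain_append_cons_cons.1 hl.1.1).2.1
    by_cases hc : c ∈ B
    · exact hl.no_insert hv (hdom c hc d hd hadj.symm) (hvB c hc (by rintro rfl; simp at hv))
    · have hcD : c ∈ D := (hcl d hd c hadj).resolve_right hc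
      rcases List.mem_cons.1 hb with rfl | hb
      · exact hc hbB
      · exact avoid_aux hcl hvB hdom q (p ++ [d]) c (by simpa using hl) (by simpa using hv) hcD
          b hb hbB

/-- A longest path that meets the clique `B` and misses the dominating `v` avoids `D`. -/
lemma LP.avoid {B D : Set V} {v : V} {l : List V}
    (hcl : ∀ d ∈ D, ∀ u, G.Adj d u → u ∈ D ∨ u ∈ B)
    (hdisj : ∀ d ∈ D, d ∉ B)
    (hvB : ∀ b ∈ B, b ≠ v → G.Adj v b)
    (hdom : ∀ b ∈ B, ∀ d ∈ D, G.Adj b d → G.Adj v d)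
    (hl : LP G l) (hv : v ∉ l) (hB : ∃ b ∈ l, b ∈ B) : ∀ d ∈ l, d ∉ D := by
  intro d hdl hd
  obtain ⟨b, hbl, hb⟩ := hB
  obtain ⟨p, q, rfl⟩ := List.append_of_mem hdl
  rcases List.mem_append.1 hbl with h | h
  · have h' := hl.reverse
    rw [List.reverse_append, List.reverse_cons, List.append_assoc] at h'
    exact avoid_aux hcl hvB hdom p.reverse q.reverse d h'
      (by simp at hv ⊢; tauto) hd b (by simpa using h) hb
  · rcases List.mem_cons.1 h with rfl | h
    · exact hdisj _ hd hb
    · exact avoid_aux hcl hvB hdom q p d hl hv hd b h hb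

lemma exists_first {B : Set V} : ∀ {l : List V}, (∃ b ∈ l, b ∈ B) →
    ∃ s b q, l = s ++ b :: q ∧ b ∈ B ∧ ∀ u ∈ s, u ∉ B
  | [], h => by simp at h
  | a :: l, h => by
    by_cases ha : a ∈ B
    · exact ⟨[], a, l, rfl, ha, by simp⟩
    · obtain ⟨b, hb, hbB⟩ := h
      rcases List.mem_cons.1 hb with rfl | hb
      · exact absurd hbB ha
      · obtain ⟨s, b', q, rfl, h1, h2⟩ := exists_first ⟨b, hb, hbB⟩
        refine ⟨a :: s, b', q, rfl, h1, ?_⟩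
        intro u hu
        rcases List.mem_cons.1 hu with rfl | hu
        · exact ha
        · exact h2 u hu

lemma all_D {B D : Set V} (hcl : ∀ d ∈ D, ∀ u, G.Adj d u → u ∈ D ∨ u ∈ B) {u : V} (hu : u ∈ D) :
    ∀ t : List V, (t ++ [u]).IsChain G.Adj → (∀ a ∈ t, a ∉ B) → ∀ a ∈ t ++ [u], a ∈ D
  | [], _, _ => by simpa using hu
  | [a], h, hB => by
    have h1 : G.Adj a u := by simpa using h
    have := (hcl u hu a h1.symm).resolve_right (hB a (by simp))
    simp [this, hu]
  | a :: c :: t, h, hB => by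
    have h' : G.Adj a c ∧ ((c :: t) ++ [u]).IsChain G.Adj := by
      simpa [List.isChain_cons_cons] using h
    have ih := all_D hcl hu (c :: t) h'.2 (fun x hx => hB x (List.mem_cons_of_mem _ hx))
    intro x hx
    rcases List.mem_cons.1 hx with rfl | hx
    · exact (hcl c (ih c (by simp)) x h'.1.symm).resolve_right (hB x (by simp))
    · exact ih x hx

/-- A connecting path between two sets. -/
lemma exists_connect (hG : G.Connected) {A C : Set V} (hA : A.Nonempty) (hC : C.Nonempty)
    (hAC : Disjoint A C) : ∃ a ∈ A, ∃ c ∈ C, ∃ m : List V, PL G (a :: m ++ [c]) ∧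
      ∀ x ∈ m, x ∉ A ∧ x ∉ C := by
  classical
  have hex : ∃ n, ∃ a ∈ A, ∃ c ∈ C, ∃ p : G.Walk a c, p.length = n := by
    obtain ⟨a, ha⟩ := hA
    obtain ⟨c, hc⟩ := hC
    obtain ⟨p⟩ := hG.preconnected a c
    exact ⟨_, a, ha, c, hc, p, rfl⟩
  obtain ⟨a, ha, c, hc, p, hp⟩ := Nat.find_spec hex
  have hmin : ∀ a' ∈ A, ∀ c' ∈ C, ∀ q : G.Walk a' c', p.length ≤ q.length := by
    intro a' ha' c' hc' q
    rw [hp]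
    exact Nat.find_min' hex ⟨a', ha', c', hc', q, rfl⟩
  have hpath : p.IsPath := by
    have h1 := hmin a ha c hc p.bypass
    have := Walk.bypass_eq_self_of_length_le_length_bypass p h1
    rw [← this]; exact p.bypass_isPath
  have hne : a ≠ c := fun h => Set.disjoint_left.1 hAC ha (h ▸ hc)
  have hsup : ∃ m, p.support = a :: m ++ [c] := by
    cases p with
    | nil => exact absurd rfl hne
    | cons h q =>
      refine ⟨q.support.dropLast, ?_⟩
      have := List.dropLast_append_getLast (l := q.support) (by simp)
      simp only [Walk.getLast_support] at this
      simp [this]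
  obtain ⟨m, hm⟩ := hsup
  have hnd := hpath.support_nodup
  rw [hm] at hnd
  refine ⟨a, ha, c, hc, m, ⟨hm ▸ p.isChain_adj_support, hnd⟩, ?_⟩
  intro x hx
  have hxp : x ∈ p.support := by rw [hm]; simp [hx]
  have hspec := congrArg Walk.length (p.take_spec hxp)
  rw [Walk.length_append] at hspec
  have hxa : x ≠ a := by rintro rfl; simp [hx] at hnd
  have hxc : x ≠ c := by
    rintro rfl
    rw [List.nodup_append] at hnd
    exact hnd.2.2 x (by simp [hx]) x (by simp) rfl
  constructor
  · intro hxA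
    have h1 := hmin x hxA c hc (p.dropUntil x hxp)
    exact hxa (Walk.eq_of_length_eq_zero (p := p.takeUntil x hxp) (by omega)).symm
  · intro hxC
    have h1 := hmin a ha x hxC (p.takeUntil x hxp)
    exact hxc (Walk.eq_of_length_eq_zero (p := p.dropUntil x hxp) (by omega))

/-- Orient a list so that the part up to a given vertex is at least half. -/
lemma LP.orient {l : List V} (h : LP G l) {a : V} (ha : a ∈ l) :
    ∃ p q, LP G (p ++ a :: q) ∧ q.length ≤ p.length ∧ (p ++ a :: q).length = l.length ∧
      ∀ x, x ∈ p ++ a :: q ↔ x ∈ l := by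
  obtain ⟨p, q, rfl⟩ := List.append_of_mem ha
  rcases le_total q.length p.length with hle | hle
  · exact ⟨p, q, h, hle, rfl, fun _ => Iff.rfl⟩
  · refine ⟨q.reverse, p.reverse, ?_, by simpa using hle, by simp; omega, ?_⟩
    · simpa using h.reverse
    · intro x; simp; tauto

lemma LP.inter (hG : G.Connected) {l l' : List V} (h : LP G l) (h' : LP G l') :
    ∃ w ∈ l, w ∈ l' := by
  by_contra hcon
  push Not at hcon
  obtain ⟨v⟩ := hG.nonempty
  have hv : PL G [v] := ⟨by simp, by simp⟩
  have hl : l ≠ [] := by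
    rintro rfl
    simpa using h.2 _ hv
  have hl' : l' ≠ [] := by
    rintro rfl
    simpa using h'.2 _ hv
  obtain ⟨a, ha, c, hc, m, hm, hmd⟩ := exists_connect hG (A := {x | x ∈ l}) (C := {x | x ∈ l'})
    (List.exists_mem_of_ne_nil l hl) (List.exists_mem_of_ne_nil l' hl')
    (Set.disjoint_left.2 hcon)
  obtain ⟨p, q, hpq, hlen, hleq, hmem⟩ := h.orient ha
  obtain ⟨p', q', hpq', hlen', hleq', hmem'⟩ := h'.orient hc
  have hr := hpq'.reverse
  have hnew : PL G (p ++ a :: (m ++ c :: p'.reverse)) := by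
    constructor
    · rw [List.isChain_split]
      refine ⟨(List.isChain_split.1 hpq.1.1).1, ?_⟩
      rw [← List.cons_append, List.isChain_split]
      refine ⟨hm.1, ?_⟩
      have := hr.1.1
      rw [List.reverse_append, List.reverse_cons, List.append_assoc] at this
      exact (List.isChain_split.1 this).2
    · have n1 := hpq.1.2
      have n2 := hpq'.1.2
      have n3 := hm.2
      simp only [Set.mem_ofPred_eq, ← hmem, ← hmem'] at hmd hcon
      simp only [List.nodup_append, List.nodup_cons, List.mem_append, List.mem_cons,
        List.nodup_reverse, List.mem_reverse, List.cons_append] at *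
      grind
  have e1 := h.2 _ hnew
  have e2 := h'.2 _ hnew
  simp at e1 e2 hleq hleq'
  omega

end lists

/-- `a` lies below `b` in `T` rooted at `r`. -/
def Below {W : Type} (T : SimpleGraph W) (r a b : W) : Prop := ∀ p : T.Walk r b, a ∈ p.support

section trees
variable {W : Type} {T : SimpleGraph W} {r : W}

lemma Below.refl (a : W) : Below T r a a := fun p => p.end_mem_support

lemma Below.root (a : W) : Below T r r a := fun p => p.start_mem_support

lemma Below.trans {a b c : W} (h : Below T r a b) (h' : Below T r b c) : Below T r a c := by
  classical
  intro p
  exact p.support_takeUntil_subset_support (h' p) (h (p.takeUntil b (h' p)))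

lemma Below.dist_lt (hT : T.IsTree) {a b : W} (h : Below T r a b) (hne : a ≠ b) :
    T.dist r a < T.dist r b := by
  classical
  obtain ⟨p, hp⟩ := (hT.connected.preconnected r b).exists_walk_length_eq_dist
  rw [← hp]
  exact lt_of_le_of_lt (dist_le (p.takeUntil a (h p))) (p.length_takeUntil_lt_length (h p) hne)

lemma Below.antisymm (hT : T.IsTree) {a b : W} (h : Below T r a b) (h' : Below T r b a) :
    a = b := by
  by_contra hne
  have h1 := h.dist_lt hT hne
  have h2 := h'.dist_lt hT (Ne.symm hne)
  omega

lemma Below.eq_root {a : W} (h : Below T r a r) : a = r := by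
  simpa using h Walk.nil

lemma below_of_path (hT : T.IsTree) {a b : W} {p : T.Walk r b} (hp : p.IsPath)
    (ha : a ∈ p.support) : Below T r a b := by
  classical
  intro q
  have := (hT.existsUnique_path r b).unique hp q.bypass_isPath
  rw [this] at ha
  exact q.support_bypass_subset_support ha

lemma below_total (hT : T.IsTree) {a b c : W} (ha : Below T r a c) (hb : Below T r b c) :
    Below T r a b ∨ Below T r b a := by
  classical
  obtain ⟨p, hp⟩ := (hT.existsUnique_path r c).exists
  have h1 := hb p
  rw [← p.take_spec (ha p), Walk.mem_support_append_iff] at h1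
  rcases h1 with h1 | h1
  · exact Or.inr (below_of_path hT (hp.takeUntil _) h1)
  · left
    have hq : (((p.takeUntil a (ha p)).append
      ((p.dropUntil a (ha p)).takeUntil b h1))).IsPath := by
      have := hp
      rw [← p.take_spec (ha p), ← (p.dropUntil a (ha p)).take_spec h1,
        Walk.append_assoc] at this
      exact this.of_append_left
    exact below_of_path hT hq (by simp [Walk.mem_support_append_iff])

lemma below_adj (hT : T.IsTree) {a b : W} (h : T.Adj a b) : Below T r a b ∨ Below T r b a := by
  classical
  obtain ⟨p, hp⟩ := (hT.existsUnique_path r a).exists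
  by_cases hb : b ∈ p.support
  · exact Or.inr (below_of_path hT hp hb)
  · exact Or.inl (below_of_path hT (hp.concat hb h) (by simp [Walk.support_concat]))

lemma below_step {x b b' : W} (h : Below T r x b) (hne : b ≠ x) (hadj : T.Adj b b') :
    Below T r x b' := by
  intro p
  have := h (p.concat hadj.symm)
  rw [Walk.support_concat] at this
  simp at this
  rcases this with h | h
  · exact h
  · exact absurd h.symm hne

/-- induction along a connected set -/
lemma conn_induction {S : Set W} (hS : (T.induce S).Connected) {P : W → Prop} {s : W}
    (hs : s ∈ S) (h0 : P s) (hstep : ∀ a ∈ S, ∀ b ∈ S, T.Adj a b → P a → P b) :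
    ∀ b ∈ S, P b := by
  intro b hb
  obtain ⟨p⟩ := hS.preconnected ⟨s, hs⟩ ⟨b, hb⟩
  have : ∀ (x y : S), (T.induce S).Walk x y → P x → P y := by
    intro x y p
    induction p with
    | nil => exact id
    | cons h _ ih => exact fun hx => ih (hstep _ (Subtype.property _) _ (Subtype.property _) h hx)
  exact this _ _ p h0

lemma conn_above {S : Set W} (hS : (T.induce S).Connected) {x b : W} (hb : b ∈ S)
    (hxb : Below T r x b) (hx : x ∉ S) : ∀ y ∈ S, Below T r x y :=
  conn_induction hS hb hxb
    (fun _ ha _ _ hadj h => below_step h (fun e => hx (e ▸ ha)) hadj)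

lemma conn_convex (hT : T.IsTree) {S : Set W} (hS : (T.induce S).Connected) {x y z : W}
    (hx : x ∈ S) (hz : z ∈ S) (hxy : Below T r x y) (hyz : Below T r y z) : y ∈ S := by
  by_contra hy
  have := conn_above hS hz hyz hy x hx
  exact hy (this.antisymm hT hxy ▸ hx)

lemma conn_min [Finite W] (hT : T.IsTree) {S : Set W} (hS : (T.induce S).Connected) :
    ∃ m ∈ S, ∀ y ∈ S, Below T r m y := by
  obtain ⟨⟨s, hs⟩⟩ := hS.nonempty
  obtain ⟨m, hm, hmin⟩ := Set.exists_min_image S (T.dist r) (Set.toFinite S) ⟨s, hs⟩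
  refine ⟨m, hm, conn_induction hS hm (Below.refl m) ?_⟩
  intro a _ b hb hadj hma
  by_cases ham : a = m
  · subst ham
    rcases below_adj (r := r) hT hadj with h | h
    · exact h
    · have := h.dist_lt hT hadj.ne'
      have := hmin b hb
      omega
  · exact below_step hma ham hadj

lemma exists_child (hT : T.IsTree) {u a : W} (h : Below T r u a) (hne : u ≠ a) :
    ∃ c, T.Adj u c ∧ Below T r u c ∧ Below T r c a := by
  classical
  obtain ⟨p, hp⟩ := (hT.existsUnique_path r a).exists
  have hu := h p
  obtain ⟨q, q', rfl⟩ := Walk.mem_support_iff_exists_append.1 hu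
  cases q' with
  | nil => exact absurd rfl hne
  | @cons _ c _ hadj q' =>
    refine ⟨c, hadj, ?_, below_of_path hT hp (by simp [Walk.mem_support_append_iff])⟩
    have h1 : (q.append (Walk.cons hadj Walk.nil)).IsPath := by
      have : (q.append (Walk.cons hadj q')) =
          (q.append (Walk.cons hadj Walk.nil)).append q' := by
        rw [← Walk.append_assoc]; rfl
      rw [this] at hp
      exact hp.of_append_left
    exact below_of_path hT h1 (by simp [Walk.mem_support_append_iff])

lemma exists_parent (hT : T.IsTree) {u : W} (hne : u ≠ r) : ∃ c, T.Adj u c ∧ Below T r c u := by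
  classical
  obtain ⟨p, hp⟩ := (hT.existsUnique_path r u).exists
  have hnil : ¬ p.Nil := Walk.not_nil_of_ne hne.symm
  exact ⟨p.penultimate, (p.adj_penultimate hnil).symm,
    below_of_path hT hp (p.getVert_mem_support _)⟩

/-- The choice of a centre. -/
lemma exists_centre (h : IsSubdividedStar T) :
    ∃ r : W, ∀ u, u ≠ r → (T.neighborSet u).ncard < 3 := by
  by_cases hex : ∃ r, 3 ≤ (T.neighborSet r).ncard
  · obtain ⟨r, hr⟩ := hex
    refine ⟨r, fun u hu => ?_⟩
    by_contra hc
    exact hu (h.2 _ _ (by omega) hr)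
  · push Not at hex
    obtain ⟨r⟩ := h.1.connected.nonempty
    exact ⟨r, fun u _ => hex u⟩

lemma star_total [Finite W] (hT : T.IsTree) (hr : ∀ u, u ≠ r → (T.neighborSet u).ncard < 3)
    {w a b : W} (hw : w ≠ r) (ha : Below T r w a) (hb : Below T r w b) :
    Below T r a b ∨ Below T r b a := by
  obtain ⟨u, ⟨hu1, hu2, hu3⟩, hmax⟩ := Set.exists_max_image
    {u | Below T r w u ∧ Below T r u a ∧ Below T r u b} (T.dist r) (Set.toFinite _)
    ⟨w, Below.refl w, ha, hb⟩
  by_cases hua : u = a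
  · subst hua; exact Or.inl hu3
  by_cases hub : u = b
  · subst hub; exact Or.inr hu2
  exfalso
  have hur : u ≠ r := by
    rintro rfl
    exact hw hu1.eq_root
  obtain ⟨c, hc, huc, hca⟩ := exists_child hT hu2 hua
  obtain ⟨c', hc', huc', hcb⟩ := exists_child hT hu3 hub
  obtain ⟨p, hp, hpu⟩ := exists_parent hT hur
  have hcc : c ≠ c' := by
    rintro rfl
    have := hmax c ⟨hu1.trans huc, hca, hcb⟩
    have := huc.dist_lt hT hc.ne
    omega
  have hpc : p ≠ c := by
    rintro rfl
    exact hc.ne (huc.antisymm hT hpu)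
  have hpc' : p ≠ c' := by
    rintro rfl
    exact hc'.ne (huc'.antisymm hT hpu)
  have h3 : ({p, c, c'} : Set W).ncard = 3 := Set.ncard_eq_three.2 ⟨p, c, c', hpc, hpc', hcc, rfl⟩
  have hsub : ({p, c, c'} : Set W) ⊆ T.neighborSet u := by
    intro x hx
    rcases hx with rfl | rfl | rfl
    · exact hp
    · exact hc
    · exact hc'
  have := Set.ncard_le_ncard hsub (Set.toFinite _)
  have := hr u hur
  omega

/-- A connected set avoiding the root and meeting the branch at the child `c` lies in it. -/
lemma conn_branch [Finite W] (hT : T.IsTree) {S : Set W} (hS : (T.induce S).Connected)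
    (hr : r ∉ S) {c y : W} (hc : T.Adj r c) (hy : y ∈ S) (hcy : Below T r c y) :
    ∀ z ∈ S, Below T r c z := by
  obtain ⟨m, hm, hmin⟩ := conn_min (r := r) hT hS
  intro z hz
  rcases below_total hT hcy (hmin y hy) with h | h
  · exact h.trans (hmin z hz)
  · have := h (Walk.cons hc Walk.nil)
    simp at this
    rcases this with rfl | rfl
    · exact absurd hm hr
    · exact hmin z hz

end trees

section main
variable {V W : Type} {G : SimpleGraph V} {T : SimpleGraph W} {r : W}

lemma rep_adj (R : TreeRep G T) {u v : V} {x : W} (hne : u ≠ v) (hu : x ∈ R.S u)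
    (hv : x ∈ R.S v) : G.Adj u v := (R.adj_iff u v hne).2 ⟨x, hu, hv⟩

lemma adj_rep (R : TreeRep G T) {u v : V} (h : G.Adj u v) : ∃ x, x ∈ R.S u ∧ x ∈ R.S v :=
  (R.adj_iff u v h.ne).1 h

/-- A vertex of the bag at `x` reaching furthest into the chain above `z`. -/
lemma exists_dominating [Finite W] (R : TreeRep G T)
    (hr : ∀ u, u ≠ r → (T.neighborSet u).ncard < 3) {x z : W} (hxz : Below T r x z)
    (hz : z ≠ r) (hne : ∃ b, x ∈ R.S b) :
    ∃ v, x ∈ R.S v ∧ ∀ b, x ∈ R.S b → ∀ d, x ∉ R.S d → (∀ y ∈ R.S d, Below T r z y) →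
      G.Adj b d → G.Adj v d := by
  have hT := R.isTree
  by_cases hY : {y | Below T r z y ∧ ∃ b, x ∈ R.S b ∧ y ∈ R.S b}.Nonempty
  · obtain ⟨y, ⟨hzy, v, hxv, hyv⟩, hmax⟩ := Set.exists_max_image _ (T.dist r) (Set.toFinite _) hY
    refine ⟨v, hxv, fun b hb d hxd hd hbd => ?_⟩
    obtain ⟨y', hyb, hyd'⟩ := adj_rep R hbd
    have hzy' := hd y' hyd'
    have hle := hmax y' ⟨hzy', b, hb, hyb⟩
    have hyy : Below T r y' y := by
      rcases star_total hT hr hz hzy' hzy with h | h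
      · exact h
      · by_cases he : y = y'
        · subst he; exact h
        · have := h.dist_lt hT he
          omega
    have : y' ∈ R.S v :=
      conn_convex hT (R.subtree_connected v) hxv hyv (hxz.trans hzy') hyy
    exact rep_adj R (by rintro rfl; exact hxd hxv) this hyd'
  · obtain ⟨v, hv⟩ := hne
    refine ⟨v, hv, fun b hb d hxd hd hbd => ?_⟩
    obtain ⟨y', hyb, hyd'⟩ := adj_rep R hbd
    exact absurd ⟨y', hd y' hyd', b, hb, hyb⟩ hY

/-- The union of the subtrees of the vertices of a list. -/
def Yset (R : TreeRep G T) (l : List V) : Set W := {y | ∃ u ∈ l, y ∈ R.S u}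

lemma Yset_conn (R : TreeRep G T) : ∀ l : List V, l ≠ [] → l.IsChain G.Adj →
    (T.induce (Yset R l)).Connected
  | [], h, _ => absurd rfl h
  | [a], _, _ => by
    have : Yset R [a] = R.S a := by ext; simp [Yset]
    rw [this]; exact R.subtree_connected a
  | a :: b :: l, _, h => by
    rw [List.isChain_cons_cons] at h
    have ih := Yset_conn R (b :: l) (by simp) h.2
    have : Yset R (a :: b :: l) = R.S a ∪ Yset R (b :: l) := by
      ext; simp [Yset]
    rw [this]
    obtain ⟨x, hxa, hxb⟩ := adj_rep R h.1
    exact induce_union_connected (R.subtree_connected a).preconnected ih.preconnected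
      ⟨x, hxa, b, by simp, hxb⟩

lemma LP.ne_nil [Nonempty V] {l : List V} (h : LP G l) : l ≠ [] := by
  rintro rfl
  simpa using h.2 [Classical.arbitrary V] ⟨by simp, by simp⟩

/-- Case where the central bag meets every longest path. -/
lemma case_centre [Fintype V] [Nonempty V] [Finite W] (R : TreeRep G T)
    (hr : ∀ u, u ≠ r → (T.neighborSet u).ncard < 3) (hex : ∃ l, LP G l)
    (hK : ∀ l, LP G l → ∃ b ∈ l, r ∈ R.S b) : ∃ v, ∀ l, LP G l → v ∈ l := by
  classical
  have hT := R.isTree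
  have hne : ∃ b, r ∈ R.S b := by
    obtain ⟨l, hl⟩ := hex
    obtain ⟨b, _, hb⟩ := hK l hl
    exact ⟨b, hb⟩
  let Tail : List V → Prop := fun t => ∃ b, r ∈ R.S b ∧ (t ++ [b]).IsChain G.Adj ∧ t.Nodup ∧
    ∀ u ∈ t, r ∉ R.S u
  have htail : ∃ t, Tail t ∧ ∀ s, Tail s → s.length ≤ t.length := by
    have h0 : ∃ t, Tail t ∧ t.length = 0 := by
      obtain ⟨b, hb⟩ := hne
      exact ⟨[], ⟨b, hb, by simp, by simp, by simp⟩, rfl⟩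
    have h1 := Nat.findGreatest_spec (P := fun n => ∃ t, Tail t ∧ t.length = n)
      (Nat.zero_le (Fintype.card V)) h0
    obtain ⟨t, ht, htl⟩ := h1
    refine ⟨t, ht, fun s hs => ?_⟩
    rw [htl]
    have hs' := hs
    obtain ⟨_, _, _, hnd, _⟩ := hs'
    exact Nat.le_findGreatest hnd.length_le_card ⟨s, hs, rfl⟩
  obtain ⟨t, ⟨b, hb, htc, htn, htK⟩, hmax⟩ := htail
  have hv : ∃ v, r ∈ R.S v ∧ (t ++ [v]).IsChain G.Adj ∧
      ∀ l, LP G l → v ∉ l → ∀ u ∈ t, u ∉ l := by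
    rcases List.eq_nil_or_concat t with rfl | ⟨t', u, rfl⟩
    · exact ⟨b, hb, by simp, by simp⟩
    · rw [List.concat_eq_append] at *
      have hru : r ∉ R.S u := htK u (by simp)
      obtain ⟨m, hm, hmin⟩ := conn_min (r := r) hT (R.subtree_connected u)
      obtain ⟨c, hrc, _, hcm⟩ := exists_child hT (Below.root (T := T) (r := r) m)
        (by rintro rfl; exact hru hm)
      obtain ⟨v, hv, hdom⟩ := exists_dominating R hr (Below.root c) hrc.ne' ⟨b, hb⟩
      let D : Set V := {d | r ∉ R.S d ∧ ∀ y ∈ R.S d, Below T r c y}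
      have huD : u ∈ D := ⟨hru, fun y hy => hcm.trans (hmin y hy)⟩
      have hcl : ∀ d ∈ D, ∀ w, G.Adj d w → w ∈ D ∨ w ∈ {b | r ∈ R.S b} := by
        intro d hd w hdw
        by_cases hw : r ∈ R.S w
        · exact Or.inr hw
        · obtain ⟨y, hyd, hyw⟩ := adj_rep R hdw
          exact Or.inl ⟨hw, conn_branch hT (R.subtree_connected w) hw hrc hyw (hd.2 y hyd)⟩
      rw [List.append_assoc] at htc
      have htc' := List.isChain_append_cons_cons.1 htc
      have hall := all_D hcl huD t' htc'.1 (fun a ha => htK a (by simp [ha]))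
      have hvu : G.Adj v u := hdom b hb u hru huD.2 htc'.2.1.symm
      refine ⟨v, hv, ?_, ?_⟩
      · rw [List.append_assoc]
        exact List.isChain_append_cons_cons.2 ⟨htc'.1, hvu.symm, by simp⟩
      · intro l hl hvl w hw hwl
        exact hl.avoid hcl (fun d hd => hd.1)
          (fun b' hb' hne' => rep_adj R hne'.symm hv hb')
          (fun b' hb' d hd hadj => hdom b' hb' d hd.1 hd.2 hadj) hvl (hK l hl) w hwl (hall w hw)
  obtain ⟨v, hvr, hvc, hvd⟩ := hv
  refine ⟨v, fun l hl => ?_⟩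
  by_contra hvl
  obtain ⟨s, b1, q, rfl, hb1, hs⟩ := exists_first (B := {b | r ∈ R.S b}) (hK l hl)
  have hdis := hvd _ hl hvl
  have hsT : Tail s := ⟨b1, hb1, (List.isChain_split.1 hl.1.1).1,
    (List.nodup_append.1 hl.1.2).1, hs⟩
  have hlen := hmax s hsT
  have hvb : G.Adj v b1 := rep_adj R (by rintro rfl; simp at hvl) hvr hb1
  have hvt : v ∉ t := fun h => htK v h hvr
  have hnew : PL G (t ++ v :: b1 :: q) := by
    constructor
    · rw [List.isChain_append_cons_cons]
      exact ⟨hvc, hvb, (List.isChain_split.1 hl.1.1).2⟩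
    · have n1 := hl.1.2
      simp only [List.nodup_append, List.nodup_cons, List.mem_append, List.mem_cons] at *
      grind
  have := hl.2 _ hnew
  simp at this
  omega

/-- Case where some longest path misses the central bag. -/
lemma case_leg [Nonempty V] [Finite W] (hG : G.Connected) (R : TreeRep G T)
    (hr : ∀ u, u ≠ r → (T.neighborSet u).ncard < 3)
    (hK : ∃ l, LP G l ∧ ∀ b ∈ l, r ∉ R.S b) : ∃ v, ∀ l, LP G l → v ∈ l := by
  have hT := R.isTree
  obtain ⟨l1, hl1, hl1K⟩ := hK
  obtain ⟨m1, hm1, hm1'⟩ := conn_min (r := r) hT (Yset_conn R l1 hl1.ne_nil hl1.1.1)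
  obtain ⟨x, ⟨l0, hl0, hl0K, hx0, hxmin⟩, hmax⟩ := Set.exists_max_image
    {m | ∃ l, LP G l ∧ (∀ b ∈ l, r ∉ R.S b) ∧ m ∈ Yset R l ∧ ∀ y ∈ Yset R l, Below T r m y}
    (T.dist r) (Set.toFinite _) ⟨m1, l1, hl1, hl1K, hm1, hm1'⟩
  have hxr : x ≠ r := by
    rintro rfl
    obtain ⟨u, hu, hxu⟩ := hx0
    exact hl0K u hu hxu
  have hB : ∀ l, LP G l → ∃ b ∈ l, x ∈ R.S b := by
    intro l hl
    by_contra hxl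
    have hxl : x ∉ Yset R l := hxl
    obtain ⟨w, hwl, hw0⟩ := LP.inter hG hl hl0
    obtain ⟨⟨y, hy⟩⟩ := (R.subtree_connected w).nonempty
    have hconn := Yset_conn R l hl.ne_nil hl.1.1
    have habove := conn_above hconn (show y ∈ Yset R l from ⟨w, hwl, hy⟩)
      (hxmin y ⟨w, hw0, hy⟩) hxl
    by_cases hlK : ∀ b ∈ l, r ∉ R.S b
    · obtain ⟨m, hm, hm'⟩ := conn_min (r := r) hT hconn
      have h1 := hmax m ⟨l, hl, hlK, hm, hm'⟩
      have h2 := (habove m hm).dist_lt hT (by rintro rfl; exact hxl hm)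
      omega
    · push Not at hlK
      obtain ⟨b, hb, hrb⟩ := hlK
      exact hxr (habove r ⟨b, hb, hrb⟩).eq_root
  obtain ⟨v, hv, hdom⟩ := exists_dominating R hr (Below.refl x) hxr (by
    obtain ⟨b, _, hb⟩ := hB l0 hl0
    exact ⟨b, hb⟩)
  refine ⟨v, fun l hl => ?_⟩
  by_contra hvl
  let D : Set V := {d | x ∉ R.S d ∧ ∀ y ∈ R.S d, Below T r x y}
  have hcl : ∀ d ∈ D, ∀ w, G.Adj d w → w ∈ D ∨ w ∈ {b | x ∈ R.S b} := by
    intro d hd w hdw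
    by_cases hw : x ∈ R.S w
    · exact Or.inr hw
    · obtain ⟨y, hyd, hyw⟩ := adj_rep R hdw
      exact Or.inl ⟨hw, conn_above (R.subtree_connected w) hyw (hd.2 y hyd) hw⟩
  have havoid := hl.avoid hcl (fun d hd => hd.1)
    (fun b' hb' hne' => rep_adj R hne'.symm hv hb')
    (fun b' hb' d hd hadj => hdom b' hb' d hd.1 hd.2 hadj) hvl (hB l hl)
  obtain ⟨w, hwl, hw0⟩ := LP.inter hG hl hl0
  have hwx : ∀ y ∈ R.S w, Below T r x y := fun y hy => hxmin y ⟨w, hw0, hy⟩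
  have hxw : x ∈ R.S w := by
    by_contra h
    exact havoid w hwl ⟨h, hwx⟩
  obtain ⟨p, q, rfl⟩ := List.append_of_mem hwl
  have hvw : G.Adj v w := rep_adj R (by rintro rfl; exact hvl hwl) hv hxw
  cases q with
  | nil => exact hl.no_last hvl hvw
  | cons u q =>
    have hwu : G.Adj w u := (List.isChain_append_cons_cons.1 hl.1.1).2.1
    by_cases hxu : x ∈ R.S u
    · exact hl.no_insert hvl hvw (rep_adj R (by rintro rfl; simp at hvl) hv hxu)
    · obtain ⟨y, hyw, hyu⟩ := adj_rep R hwu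
      exact havoid u (by simp) ⟨hxu, conn_above (R.subtree_connected u) hyu (hwx y hyw) hxu⟩

lemma main_exists [Fintype V] [Fintype W] (hG : G.Connected) (R : TreeRep G T)
    (hstar : IsSubdividedStar T) : ∃ v, ∀ l, LP G l → v ∈ l := by
  have := hG.nonempty
  obtain ⟨r, hr⟩ := exists_centre hstar
  by_cases hK : ∀ l, LP G l → ∃ b ∈ l, r ∈ R.S b
  · obtain ⟨a, b, p, hp⟩ := exists_longest (G := G)
    exact case_centre R hr ⟨_, LP.of_longest hp⟩ hK
  · push Not at hK
    exact case_leg hG R hr hK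

end main

end Substar

/-- If `G` is a connected chordal graph admitting a tree representation
whose host tree is a subdivided star, then `lpt(G) = 1`; that is, some vertex of `G`
belongs to every longest path of `G`. -/
theorem substar_gallai {V W : Type} [Fintype V] [Fintype W] (G : SimpleGraph V)
    (T : SimpleGraph W) (hconn : G.Connected) (hchordal : IsChordal G)
    (R : TreeRep G T) (hstar : IsSubdividedStar T) :
    lpt G = 1 ∧
      ∃ v : V, ∀ (a b : V) (p : G.Walk a b), IsLongestPath G p → v ∈ p.support := by
  have := hconn.nonempty
  obtain ⟨v, hv⟩ := Substar.main_exists hconn R hstar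
  have hv' : ∀ (a b : V) (p : G.Walk a b), IsLongestPath G p → v ∈ p.support :=
    fun a b p hp => hv _ (Substar.LP.of_longest hp)
  refine ⟨?_, v, hv'⟩
  have hmem : 1 ∈ {k : ℕ | ∃ A : Set V, A.Finite ∧ A.ncard = k ∧
      ∀ (a b : V) (p : G.Walk a b), IsLongestPath G p → ∃ v ∈ A, v ∈ p.support} :=
    ⟨{v}, Set.finite_singleton v, Set.ncard_singleton v, fun a b p hp => ⟨v, rfl, hv' a b p hp⟩⟩
  refine le_antisymm (Nat.sInf_le hmem) (le_csInf ⟨1, hmem⟩ ?_)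
  rintro k ⟨A, hA, rfl, hk⟩
  obtain ⟨a, b, p, hp⟩ := Substar.exists_longest (G := G)
  obtain ⟨w, hw, _⟩ := hk a b p hp
  exact (Set.ncard_pos hA).2 ⟨w, hw⟩
end
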